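/- Let Φ be of type B_n or C_n, let I, J ⊆ Δ, and let λ be an integral Φ_I-regular weight with Φ_{λ̄} = Φ_J. Suppose that for some 1 ≤ i ≤ n the weight s_{e_i}λ is Φ_I-regular and λ ⟷̸ s_{e_i}λ. If (n_m, n̄_{m̄}) ≠ (0, m−1) and (n_m, n̄_{m̄}) ≠ (m̄−1, 0), then (Φ, Φ_I, Φ_J) is strongly separable. -/

import Mathlib

namespace JantzenBlocks

open scoped Classical

/-- The three classical types `B`, `C`, `D`. -/
inductive CType : Type
  | B | C | D
deriving DecidableEq

/-- The weight space `ℝ^n`. -/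
abbrev V (n : ℕ) := Fin n → ℝ

noncomputable section

/-- The standard inner product on `ℝ^n`. -/
def inn {n : ℕ} (x y : V n) : ℝ := ∑ i, x i * y i

/-- The standard basis vector `e i`. -/
def ee {n : ℕ} (i : Fin n) : V n := Pi.single i 1

/-- The reflection `s_v` in the vector `v`. -/
def sRefl {n : ℕ} (v x : V n) : V n := x - (2 * inn x v / inn v v) • v

/-- The roots `±e_i ± e_j` (`i ≠ j`), i.e. the root system of type `D_n`. -/
def DRoots (n : ℕ) : Set (V n) :=
  {v | ∃ i j : Fin n, i ≠ j ∧ (v = ee i + ee j ∨ v = ee i - ee j ∨ v = -ee i - ee j)}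

/-- The ambient root system `Φ` of type `B_n`, `C_n` or `D_n`. -/
def Phi (n : ℕ) : CType → Set (V n)
  | CType.B => DRoots n ∪ {v | ∃ i : Fin n, v = ee i ∨ v = -ee i}
  | CType.C => DRoots n ∪ {v | ∃ i : Fin n, v = (2:ℝ) • ee i ∨ v = -((2:ℝ) • ee i)}
  | CType.D => DRoots n

/-- The standard positive system `Φ⁺`: roots whose first nonzero coordinate is positive. -/
def PhiPos (n : ℕ) (ct : CType) : Set (V n) :=
  {v | v ∈ Phi n ct ∧ ∃ i : Fin n, 0 < v i ∧ ∀ j : Fin n, j < i → v j = 0}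

/-- The simple root `α_{i+1}` (`0`-based index `i`). -/
def alphaR (n : ℕ) (ct : CType) (i : Fin n) : V n :=
  if h : i.1 + 1 < n then ee i - ee ⟨i.1 + 1, h⟩
  else
    match ct with
    | CType.B => ee i
    | CType.C => (2:ℝ) • ee i
    | CType.D => ee ⟨n - 2, Nat.sub_lt i.pos (by norm_num)⟩ + ee i

/-- The subsystem `Φ_I` generated by the simple roots indexed by `I`. -/
def PhiI (n : ℕ) (ct : CType) (I : Finset (Fin n)) : Set (V n) :=
  Phi n ct ∩ (Submodule.span ℝ (alphaR n ct '' (I : Set (Fin n))) : Set (V n))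

/-- `λ` is `Φ_I`-regular. -/
def RegI (n : ℕ) (ct : CType) (I : Finset (Fin n)) (lam : V n) : Prop :=
  ∀ β ∈ PhiI n ct I, inn lam β ≠ 0

/-- `λ` is integral. -/
def IntegralW (n : ℕ) (ct : CType) (lam : V n) : Prop :=
  ∀ β ∈ Phi n ct, ∃ k : ℤ, 2 * inn lam β / inn β β = (k : ℝ)

/-- `λ` is dominant. -/
def DominantW (n : ℕ) (ct : CType) (lam : V n) : Prop :=
  ∀ i : Fin n, 0 ≤ inn lam (alphaR n ct i)

/-- `μ` lies in the `W_I`-orbit of `λ` (`W_I` generated by the reflections `s_α`, `α ∈ I`). -/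
def WIOrb (n : ℕ) (ct : CType) (I : Finset (Fin n)) : V n → V n → Prop :=
  Relation.ReflTransGen (fun x y => ∃ i ∈ I, y = sRefl (alphaR n ct i) x)

/-- `μ` lies in the `W`-orbit of `λ`. -/
def WOrb (n : ℕ) (ct : CType) : V n → V n → Prop := WIOrb n ct Finset.univ

/-- `λ ∈ Λ_I⁺`. -/
def LamIPlus (n : ℕ) (ct : CType) (I : Finset (Fin n)) (lam : V n) : Prop :=
  IntegralW n ct lam ∧ ∀ i ∈ I, 0 < inn lam (alphaR n ct i)

/-- The sorted list `q_1 < q_2 < … < q_{m-1}` (`1`-based values) of indices of `Δ∖I`. -/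
def Qlist (n : ℕ) (I : Finset (Fin n)) : List ℕ :=
  ((Finset.univ \ I).sort (· ≤ ·)).map (fun j => j.1 + 1)

/-- The number `m` of segments determined by `I`. -/
def mval (n : ℕ) (I : Finset (Fin n)) : ℕ := (Qlist n I).length + 1

/-- `q_s`, with the conventions `q_0 = 0` and `q_m = n`. -/
def qval (n : ℕ) (I : Finset (Fin n)) (s : ℕ) : ℕ :=
  if s = 0 then 0 else if s < mval n I then (Qlist n I).getD (s - 1) 0 else n

/-- `I` is standard (automatic in types `B`, `C`). -/
def StandardI (n : ℕ) (ct : CType) (I : Finset (Fin n)) : Prop :=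
  ct = CType.D → ∀ h : 2 ≤ n,
    ((⟨n - 2, by omega⟩ : Fin n) ∈ I ∨ (⟨n - 1, by omega⟩ : Fin n) ∉ I)

/-- `q_s`, corrected for nonstandard `I` (where `q_{m-1}` is replaced by `n`,
so that the `(m-1)`-st segment is `(q_{m-2}, n]` and the `m`-th segment is empty). -/
def qv (n : ℕ) (ct : CType) (I : Finset (Fin n)) (s : ℕ) : ℕ :=
  if ¬ StandardI n ct I ∧ s = mval n I - 1 then n else qval n I s

/-- The segment length `n_s`. -/
def nsval (n : ℕ) (ct : CType) (I : Finset (Fin n)) (s : ℕ) : ℕ :=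
  qv n ct I s - qv n ct I (s - 1)

/-- The (`0`-based) index `i` lies in the `s`-th segment, i.e. `q_{s-1} < i+1 ≤ q_s`. -/
def InSeg (n : ℕ) (ct : CType) (I : Finset (Fin n)) (s : ℕ) (i : Fin n) : Prop :=
  qv n ct I (s - 1) < i.1 + 1 ∧ i.1 + 1 ≤ qv n ct I s

/-- `n_s^λ(a)`: the number of entries of the `s`-th segment of `λ` with absolute value `a`. -/
def nsl (n : ℕ) (ct : CType) (I : Finset (Fin n)) (lam : V n) (s : ℕ) (a : ℝ) : ℕ :=
  (Finset.univ.filter (fun i : Fin n => InSeg n ct I s i ∧ |lam i| = a)).card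

/-- `a_t = λ̄_{q̄_t}` for `1 ≤ t < m̄`, and `a_{m̄} = 0`. -/
def aval (n : ℕ) (ct : CType) (J : Finset (Fin n)) (lbar : V n) (t : ℕ) : ℝ :=
  if t < mval n J then
    (if h : qv n ct J t - 1 < n then lbar ⟨qv n ct J t - 1, h⟩ else 0)
  else 0

/-- `n_s^λ(a)` is maximal among all `Φ_I`-regular weights in the orbit of `λ`. -/
def IsMaxN (n : ℕ) (ct : CType) (I : Finset (Fin n)) (lam : V n) (s : ℕ) (a : ℝ) : Prop :=
  ∀ mu : V n, WOrb n ct lam mu → RegI n ct I mu →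
    nsl n ct I mu s a ≤ nsl n ct I lam s a

/-- The exceptional configurations of Proposition 4.7 (types `B` and `C`, with
`shortR i` the short/long root `e_i` resp. `2e_i`). -/
def ExcBC (n : ℕ) (ct : CType) (I : Finset (Fin n)) (shortR : Fin n → V n)
    (lam β : V n) : Prop :=
  ∃ s : ℕ, 1 ≤ s ∧ s < mval n I ∧ ∃ a : ℝ, 0 < a ∧
    nsl n ct I lam s a = 1 ∧
    nsl n ct I lam s 0 + nsl n ct I lam (mval n I) a = 1 ∧
    ((∃ i j : Fin n, InSeg n ct I s i ∧ InSeg n ct I s j ∧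
        |lam i| = a ∧ lam j = 0 ∧ (β = shortR i ∨ β = ee i + ee j)) ∨
     (∃ i j : Fin n, InSeg n ct I s i ∧ InSeg n ct I (mval n I) j ∧
        ((lam i = a ∧ lam j = a) ∨ (lam i = -a ∧ lam j = -a)) ∧
        (β = shortR i ∨ β = ee i + ee j)) ∨
     (∃ i j : Fin n, InSeg n ct I s i ∧ InSeg n ct I (mval n I) j ∧
        ((lam i = a ∧ lam j = -a) ∨ (lam i = -a ∧ lam j = a)) ∧
        (β = shortR i ∨ β = ee i - ee j)))

/-- The exceptional configurations of Proposition 4.7 (type `D`). -/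
def ExcD (n : ℕ) (I : Finset (Fin n)) (lam β : V n) : Prop :=
  ∃ s : ℕ, 1 ≤ s ∧ s < mval n I ∧ ∃ a : ℝ, 0 < a ∧
    nsl n CType.D I lam s a = 1 ∧ nsl n CType.D I lam (mval n I) a = 1 ∧
    nsl n CType.D I lam s 0 = 1 ∧ nsl n CType.D I lam (mval n I) 0 = 1 ∧
    ∃ i j k l : Fin n, InSeg n CType.D I s i ∧ InSeg n CType.D I s j ∧
      InSeg n CType.D I (mval n I) k ∧ InSeg n CType.D I (mval n I) l ∧
      lam j = 0 ∧ lam l = 0 ∧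
      ((((lam i = a ∧ lam k = a) ∨ (lam i = -a ∧ lam k = -a)) ∧
          (β = ee i + ee j ∨ β = ee i + ee k)) ∨
       (((lam i = a ∧ lam k = -a) ∨ (lam i = -a ∧ lam k = a)) ∧
          (β = ee i + ee j ∨ β = ee i - ee k)))

/-- The exceptional configurations in which `β` fails to be a linked root. -/
def Exc (n : ℕ) (ct : CType) (I : Finset (Fin n)) (lam β : V n) : Prop :=
  match ct with
  | CType.B => ExcBC n CType.B I (fun i => ee i) lam β
  | CType.C => ExcBC n CType.C I (fun i => (2:ℝ) • ee i) lam β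
  | CType.D => ExcD n I lam β

/-- `β` is a linked root of the `Φ_I`-regular weight `λ` (for standard `I`). -/
def PlainLinked (n : ℕ) (ct : CType) (I : Finset (Fin n)) (lam β : V n) : Prop :=
  RegI n ct I lam ∧ β ∈ PhiPos n ct ∧ β ∉ PhiI n ct I ∧
  RegI n ct I (sRefl β lam) ∧ sRefl β lam ≠ lam ∧ ¬ Exc n ct I lam β

/-- The transposition of the last two indices. -/
def swapLast (n : ℕ) (j : Fin n) : Fin n :=
  if j.1 = n - 1 then ⟨n - 2, Nat.sub_lt j.pos (by norm_num)⟩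
  else if j.1 = n - 2 then ⟨n - 1, Nat.sub_lt j.pos (by norm_num)⟩
  else j

/-- The isomorphism `φ = s_{e_n}` (negating the last coordinate). -/
def phiW {n : ℕ} (x : V n) : V n := fun j => if j.1 = n - 1 then -x j else x j

/-- The image `φ(I)` of an index set under `φ` (interchanging `α_{n-1}` and `α_n`). -/
def phiIdx (n : ℕ) (I : Finset (Fin n)) : Finset (Fin n) := I.image (swapLast n)

/-- `β` is a linked root of `λ`; for nonstandard `I` the notion is transported along `φ`. -/
def LinkedRoot (n : ℕ) (ct : CType) (I : Finset (Fin n)) (lam β : V n) : Prop :=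
  if StandardI n ct I then PlainLinked n ct I lam β
  else PlainLinked n ct (phiIdx n I) (phiW lam) (phiW β)

/-- One step in a connecting chain: `y ∈ W_I x`, or `y = w s_β x` for a linked root `β` of `x`. -/
def ConnStep (n : ℕ) (ct : CType) (I : Finset (Fin n)) (x y : V n) : Prop :=
  RegI n ct I x ∧ RegI n ct I y ∧
  (WIOrb n ct I x y ∨ ∃ β : V n, LinkedRoot n ct I x β ∧ WIOrb n ct I (sRefl β x) y)

/-- `λ ⟷ μ`: `λ` and `μ` are connected by a chain of linked roots. -/
def Conn (n : ℕ) (ct : CType) (I : Finset (Fin n)) (lam mu : V n) : Prop :=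
  RegI n ct I lam ∧ RegI n ct I mu ∧
  Relation.ReflTransGen (ConnStep n ct I) lam mu

/-- The set `^IW^Jλ̄ = Wλ̄ ∩ Λ_I⁺` of weights parametrizing the simple modules. -/
def IWJset (n : ℕ) (ct : CType) (I : Finset (Fin n)) (lbar : V n) : Set (V n) :=
  {mu | WOrb n ct lbar mu ∧ LamIPlus n ct I mu}

/-- `(S, S̄)` is a separable pair for the weight `λ`. -/
def IsSepPair (n : ℕ) (ct : CType) (I J : Finset (Fin n)) (lbar lam : V n)
    (S Sb : Finset ℕ) : Prop :=
  S.Nonempty ∧ Sb.Nonempty ∧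
  S ⊆ Finset.Icc 1 (mval n I) ∧ Sb ⊆ Finset.Icc 1 (mval n J) ∧
  1 < mval n I ∧ 1 < mval n J ∧
  (∀ s ∈ S, ∀ t ∈ Sb, IsMaxN n ct I lam s (aval n ct J lbar t)) ∧
  (∀ s ∈ Finset.Icc 1 (mval n I), s ∉ S →
     ∀ t ∈ Finset.Icc 1 (mval n J), t ∉ Sb →
       nsl n ct I lam s (aval n ct J lbar t) = 0) ∧
  (match ct with
   | CType.B => (mval n I ∈ S ↔ mval n J ∉ Sb)
   | CType.C => (mval n I ∈ S ↔ mval n J ∉ Sb)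
   | CType.D => (mval n I ∈ S ↔ mval n J ∈ Sb))

/-- `𝒟`: the set of separable pairs of the system `(Φ, Φ_I, Φ_J)`. -/
def DSet (n : ℕ) (ct : CType) (I J : Finset (Fin n)) (lbar : V n) :
    Set (Finset ℕ × Finset ℕ) :=
  {p | ∀ lam ∈ IWJset n ct I lbar, IsSepPair n ct I J lbar lam p.1 p.2}

/-- The four weakly separable pairs. -/
def IsWeakPair (n : ℕ) (I J : Finset (Fin n)) (p : Finset ℕ × Finset ℕ) : Prop :=
  p = (Finset.Icc 1 (mval n I - 1), {mval n J}) ∨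
  p = (Finset.Icc 1 (mval n I), {mval n J}) ∨
  p = ({mval n I}, Finset.Icc 1 (mval n J - 1)) ∨
  p = ({mval n I}, Finset.Icc 1 (mval n J))

/-- The system `(Φ, Φ_I, Φ_J)` is separable. -/
def SepSys (n : ℕ) (ct : CType) (I J : Finset (Fin n)) (lbar : V n) : Prop :=
  (DSet n ct I J lbar).Nonempty

/-- The system `(Φ, Φ_I, Φ_J)` is strongly separable. -/
def StronglySepSys (n : ℕ) (ct : CType) (I J : Finset (Fin n)) (lbar : V n) : Prop :=
  ∃ p ∈ DSet n ct I J lbar, ¬ IsWeakPair n I J p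

/-- The system `(Φ, Φ_I, Φ_J)` is weakly separable. -/
def WeaklySepSys (n : ℕ) (ct : CType) (I J : Finset (Fin n)) (lbar : V n) : Prop :=
  SepSys n ct I J lbar ∧ ∀ p ∈ DSet n ct I J lbar, IsWeakPair n I J p

/-- The partial ordering on separable pairs: `(S₁,S̄₁) ≤ (S₂,S̄₂)` iff `S₁ ⊆ S₂`, `S̄₁ ⊇ S̄₂`. -/
def pairLE (p q : Finset ℕ × Finset ℕ) : Prop := p.1 ⊆ q.1 ∧ q.2 ⊆ p.2

/-- Strict version of `pairLE`. -/
def pairLT (p q : Finset ℕ × Finset ℕ) : Prop := pairLE p q ∧ p ≠ q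

/-- The generating relations of the equivalence `∼` on `𝒟`. -/
def PairRel (D : Set (Finset ℕ × Finset ℕ)) (p q : Finset ℕ × Finset ℕ) : Prop :=
  p ∈ D ∧ q ∈ D ∧ ((p.2 = q.2 ∧ p.1 ⊆ q.1) ∨ (p.1 = q.1 ∧ p.2 ⊆ q.2))

/-- The equivalence relation `∼` on separable pairs. -/
def PairEquiv (D : Set (Finset ℕ × Finset ℕ)) :
    Finset ℕ × Finset ℕ → Finset ℕ × Finset ℕ → Prop :=
  Relation.EqvGen (PairRel D)

/-- A trivial separable pair. -/
def TrivialPair (n : ℕ) (ct : CType) (I J : Finset (Fin n)) (lbar : V n)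
    (p : Finset ℕ × Finset ℕ) : Prop :=
  match ct with
  | CType.B | CType.C =>
    (∃ s0 : ℕ, 1 ≤ s0 ∧ s0 < mval n I ∧
       PairEquiv (DSet n ct I J lbar) p ({s0}, Finset.Icc 1 (mval n J))) ∨
    (∃ t0 : ℕ, 1 ≤ t0 ∧ t0 < mval n J ∧
       PairEquiv (DSet n ct I J lbar) p (Finset.Icc 1 (mval n I), {t0}))
  | CType.D =>
    (∃ s0 : ℕ, 1 ≤ s0 ∧ s0 < mval n I ∧
       PairEquiv (DSet n ct I J lbar) p ({s0}, Finset.Icc 1 (mval n J - 1))) ∨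
    (∃ t0 : ℕ, 1 ≤ t0 ∧ t0 < mval n J ∧
       PairEquiv (DSet n ct I J lbar) p (Finset.Icc 1 (mval n I - 1), {t0}))

/-- The set of blocks: equivalence classes of `^IW^Jλ̄` under `⟷`. -/
def BlockSet (n : ℕ) (ct : CType) (I : Finset (Fin n)) (lbar : V n) : Set (Set (V n)) :=
  {Cl | ∃ lam ∈ IWJset n ct I lbar,
     Cl = {mu | mu ∈ IWJset n ct I lbar ∧ Conn n ct I lam mu}}

/-- The parity `P(λ)` of the number of negative entries of `λ`. -/
def Pfun (n : ℕ) (lam : V n) : ℕ :=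
  (Finset.univ.filter (fun i : Fin n => lam i < 0)).card % 2

/-- A fundamental chain `c 1 ∼ c 2 ∼ … ∼ c k` in `𝒟`. -/
def IsFundChain (D : Set (Finset ℕ × Finset ℕ)) (c : ℕ → Finset ℕ × Finset ℕ)
    (k : ℕ) : Prop :=
  1 ≤ k ∧ (∀ i, 1 ≤ i → i ≤ k → c i ∈ D) ∧
  (∀ i, 1 ≤ i → i < k →
     ((c i).1 = (c (i+1)).1 ∨ (c i).2 = (c (i+1)).2) ∧
     (pairLT (c i) (c (i+1)) ∨ pairLT (c (i+1)) (c i)))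

/-- The list of parts of the partition `π_I`. -/
def piParts (n : ℕ) (ct : CType) (I : Finset (Fin n)) : List ℕ :=
  (List.range (mval n I - 1)).map (fun s => nsval n ct I (s+1)) ++
  (List.range (mval n I - 1)).map (fun s => nsval n ct I (s+1)) ++
  (match ct with
   | CType.B => [2 * nsval n ct I (mval n I) + 1]
   | CType.C => [2 * nsval n ct I (mval n I)]
   | CType.D => if nsval n ct I (mval n I) = 0 then []
                else [2 * nsval n ct I (mval n I) - 1, 1])

/-- The `i`-th part (`1`-based) of the partition with list of parts `L`. -/
def partAt (L : List ℕ) (i : ℕ) : ℕ :=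
  (L.mergeSort (fun a b => decide (b ≤ a))).getD (i - 1) 0

/-- The `i`-th part (`1`-based) of the dual partition `π^t`: the number of parts `≥ i`. -/
def dualAt (L : List ℕ) (i : ℕ) : ℕ :=
  (L.filter (fun x => decide (i ≤ x))).length

/-- `k` is compatible with the system `(Φ, Φ_I, Φ_J)`. -/
def CompatibleK (n : ℕ) (ct : CType) (I J : Finset (Fin n)) (k : ℕ) : Prop :=
  1 ≤ k ∧ k ≤ 2 * mval n I - 1 ∧
  (match ct with
   | CType.B =>
     (Odd k ∧ k ≤ partAt (piParts n CType.B J) 2 ∧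
        2 * nsval n CType.B J (mval n J) + 1 ≤ k ∧
        partAt (piParts n CType.B I) k ≤ 2 * nsval n CType.B I (mval n I) + 1) ∨
     (Even k ∧ k ≤ 2 * nsval n CType.B J (mval n J) ∧
        2 * nsval n CType.B I (mval n I) + 1 ≤ partAt (piParts n CType.B I) k)
   | CType.C =>
     (Odd k ∧ k ≤ partAt (piParts n CType.C J) 2 ∧
        2 * nsval n CType.C J (mval n J) + 1 ≤ k ∧
        partAt (piParts n CType.C I) k ≤ 2 * nsval n CType.C I (mval n I)) ∨
     (Even k ∧ k ≤ 2 * nsval n CType.C J (mval n J) ∧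
        2 * nsval n CType.C I (mval n I) + 1 ≤ partAt (piParts n CType.C I) k)
   | CType.D =>
     (Even k ∧ k ≤ partAt (piParts n CType.D J) 2 ∧
        2 * nsval n CType.D J (mval n J) ≤ k ∧
        2 * nsval n CType.D I (mval n I) ≤ partAt (piParts n CType.D I) k) ∨
     (Odd k ∧ k ≤ 2 * nsval n CType.D J (mval n J) - 1 ∧
        partAt (piParts n CType.D I) k ≤ 2 * nsval n CType.D I (mval n I) - 1))

/-- `s_{e_{k_1}}^{ε_1} ⋯ s_{e_{k_r}}^{ε_r} μ`. -/
def applyFlips (n : ℕ) (ks : ℕ → Fin n) (eps : ℕ → Bool) : ℕ → V n → V n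
  | 0, v => v
  | (r+1), v =>
      if eps (r+1) then sRefl (ee (ks (r+1))) (applyFlips n ks eps r v)
      else applyFlips n ks eps r v

end

/-! ### Abstract symmetric 0-1 matrices -/

inductive Pos (R C : Type) : Type
  | x (r : R) (c : C) (e : Bool) : Pos R C
  | z (r : R) : Pos R C
  | u (c : C) : Pos R C

noncomputable def tog {R C : Type} (p : Pos R C) (st : Pos R C → Bool) : Pos R C → Bool :=
  fun q => xor (st q) (decide (q = p))

noncomputable def flp {R C : Type} (s : R) (a : C) (st : Pos R C → Bool) : Pos R C → Bool :=
  tog (Pos.x s a true) (tog (Pos.x s a false) st)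

theorem tog_comm {R C : Type} (p q : Pos R C) (st : Pos R C → Bool) :
    tog p (tog q st) = tog q (tog p st) := by
  funext r; simp only [tog, Bool.xor_assoc]; rw [Bool.xor_comm (decide (r = q))]

theorem tog_tog {R C : Type} (p : Pos R C) (st : Pos R C → Bool) :
    tog p (tog p st) = st := by
  funext r; simp [tog]

structure Moves {R C : Type} (E : (Pos R C → Bool) → (Pos R C → Bool) → Prop) : Prop where
  refl : ∀ st, E st st
  trans : ∀ st st' st'', E st st' → E st' st'' → E st st''
  A : ∀ st s a, st (Pos.x s a true) ≠ st (Pos.x s a false) → st (Pos.z s) = st (Pos.u a) →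
    E st (flp s a st)
  B2 : ∀ st s s' a, s ≠ s' → st (Pos.x s a true) ≠ st (Pos.x s a false) →
    st (Pos.x s' a true) ≠ st (Pos.x s' a false) → E st (flp s a (flp s' a st))
  D : ∀ st s a b, a ≠ b → st (Pos.x s a true) ≠ st (Pos.x s a false) →
    st (Pos.x s b true) ≠ st (Pos.x s b false) → E st (flp s a (flp s b st))
  B1 : ∀ st s s' a b e d e' d', s ≠ s' → a ≠ b → xor e d = xor e' d' →
    st (Pos.x s a e) = true → st (Pos.x s b d) = false →
    st (Pos.x s' a e') = false → st (Pos.x s' b d') = true →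
    E st (tog (Pos.x s a e) (tog (Pos.x s b d) (tog (Pos.x s' a e') (tog (Pos.x s' b d') st))))
  B0 : ∀ st s s' a e e', s ≠ s' → st (Pos.x s a e) = true → st (Pos.z s) = false →
    st (Pos.x s' a e') = false → st (Pos.z s') = true →
    E st (tog (Pos.x s a e) (tog (Pos.z s) (tog (Pos.x s' a e') (tog (Pos.z s') st))))
  C : ∀ st s a b e d, a ≠ b → st (Pos.x s a e) = true → st (Pos.x s b d) = false →
    st (Pos.u a) = false → st (Pos.u b) = true →
    E st (tog (Pos.x s a e) (tog (Pos.x s b d) (tog (Pos.u a) (tog (Pos.u b) st))))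

/-- complement -/
def cmpl {R C : Type} (st : Pos R C → Bool) : Pos R C → Bool := fun p => !st p

def trp {R C : Type} : Pos R C → Pos C R
  | Pos.x r c e => Pos.x c r e
  | Pos.z r => Pos.u r
  | Pos.u c => Pos.z c

/-- transposed complement -/
def tc {R C : Type} (st : Pos R C → Bool) : Pos C R → Bool := fun p => !st (trp p)

theorem cmpl_tog {R C : Type} (p : Pos R C) (st : Pos R C → Bool) :
    cmpl (tog p st) = tog p (cmpl st) := by
  funext q; simp [cmpl, tog]

theorem trp_trp {R C : Type} (p : Pos R C) : trp (trp p) = p := by cases p <;> rfl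

theorem tc_tog {R C : Type} (p : Pos R C) (st : Pos R C → Bool) :
    tc (tog p st) = tog (trp p) (tc st) := by
  funext q
  have : (trp q = p) ↔ (q = trp p) :=
    ⟨fun h => by rw [← h, trp_trp], fun h => by rw [h, trp_trp]⟩
  simp [tc, tog, this]

theorem tc_tc {R C : Type} (st : Pos R C → Bool) : tc (tc st) = st := by
  funext p; simp [tc, trp_trp]

theorem cmpl_cmpl {R C : Type} (st : Pos R C → Bool) : cmpl (cmpl st) = st := by
  funext p; simp [cmpl]

theorem cmpl_flp {R C : Type} (s : R) (a : C) (st : Pos R C → Bool) :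
    cmpl (flp s a st) = flp s a (cmpl st) := by
  simp [flp, cmpl_tog]

theorem tc_flp {R C : Type} (s : R) (a : C) (st : Pos R C → Bool) :
    tc (flp s a st) = flp a s (tc st) := by
  simp [flp, tc_tog, trp]

theorem Moves.cmpl {R C : Type} {E : (Pos R C → Bool) → (Pos R C → Bool) → Prop} (h : Moves E) :
    Moves (fun st st' => E (JantzenBlocks.cmpl st) (JantzenBlocks.cmpl st')) where
  refl st := h.refl _
  trans st st' st'' := h.trans _ _ _
  A st s a h1 h2 := by
    rw [cmpl_flp]; apply h.A <;> simpa [JantzenBlocks.cmpl] using by assumption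
  B2 st s s' a h1 h2 h3 := by
    rw [cmpl_flp, cmpl_flp]; apply h.B2 _ _ _ _ h1 <;> simpa [JantzenBlocks.cmpl] using by assumption
  D st s a b h1 h2 h3 := by
    rw [cmpl_flp, cmpl_flp]; apply h.D _ _ _ _ h1 <;> simpa [JantzenBlocks.cmpl] using by assumption
  B1 st s s' a b e d e' d' hs hab hx h1 h2 h3 h4 := by
    have := h.B1 (JantzenBlocks.cmpl st) s' s a b e' d' e d hs.symm hab hx.symm
      (by simp [JantzenBlocks.cmpl, h3]) (by simp [JantzenBlocks.cmpl, h4])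
      (by simp [JantzenBlocks.cmpl, h1]) (by simp [JantzenBlocks.cmpl, h2])
    simp only [cmpl_tog]
    convert this using 1
    funext q; simp only [tog, Bool.xor_assoc, Bool.xor_comm, Bool.xor_left_comm]
  B0 st s s' a e e' hs h1 h2 h3 h4 := by
    have := h.B0 (JantzenBlocks.cmpl st) s' s a e' e hs.symm
      (by simp [JantzenBlocks.cmpl, h3]) (by simp [JantzenBlocks.cmpl, h4])
      (by simp [JantzenBlocks.cmpl, h1]) (by simp [JantzenBlocks.cmpl, h2])
    simp only [cmpl_tog]
    convert this using 1
    funext q; simp only [tog, Bool.xor_assoc, Bool.xor_comm, Bool.xor_left_comm]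
  C st s a b e d hs h1 h2 h3 h4 := by
    have := h.C (JantzenBlocks.cmpl st) s b a d e hs.symm
      (by simp [JantzenBlocks.cmpl, h2]) (by simp [JantzenBlocks.cmpl, h1])
      (by simp [JantzenBlocks.cmpl, h4]) (by simp [JantzenBlocks.cmpl, h3])
    simp only [cmpl_tog]
    convert this using 1
    funext q; simp only [tog, Bool.xor_assoc, Bool.xor_comm, Bool.xor_left_comm]

theorem Moves.tc {R C : Type} {E : (Pos R C → Bool) → (Pos R C → Bool) → Prop} (h : Moves E) :
    Moves (fun st st' : Pos C R → Bool => E (JantzenBlocks.tc st) (JantzenBlocks.tc st')) where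
  refl st := h.refl _
  trans st st' st'' := h.trans _ _ _
  A st s a h1 h2 := by
    rw [tc_flp]; apply h.A
    · simpa [JantzenBlocks.tc, trp] using h1
    · simpa [JantzenBlocks.tc, trp] using h2.symm
  B2 st s s' a h1 h2 h3 := by
    rw [tc_flp, tc_flp]; apply h.D _ _ _ _ h1 <;> simpa [JantzenBlocks.tc, trp] using by assumption
  D st s a b h1 h2 h3 := by
    rw [tc_flp, tc_flp]; apply h.B2 _ _ _ _ h1 <;> simpa [JantzenBlocks.tc, trp] using by assumption
  B1 st s s' a b e d e' d' hs hab hx h1 h2 h3 h4 := by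
    have := h.B1 (JantzenBlocks.tc st) b a s s' d d' e e' hab.symm hs
      (by revert hx; cases e <;> cases d <;> cases e' <;> cases d' <;> simp)
      (by simp [JantzenBlocks.tc, trp, h2]) (by simp [JantzenBlocks.tc, trp, h4])
      (by simp [JantzenBlocks.tc, trp, h1]) (by simp [JantzenBlocks.tc, trp, h3])
    simp only [tc_tog, trp]
    convert this using 1
    funext q; simp only [tog, Bool.xor_assoc, Bool.xor_comm, Bool.xor_left_comm]
  B0 st s s' a e e' hs h1 h2 h3 h4 := by
    have := h.C (JantzenBlocks.tc st) a s' s e' e hs.symm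
      (by simp [JantzenBlocks.tc, trp, h3]) (by simp [JantzenBlocks.tc, trp, h1])
      (by simp [JantzenBlocks.tc, trp, h4]) (by simp [JantzenBlocks.tc, trp, h2])
    simp only [tc_tog, trp]
    convert this using 1
    funext q; simp only [tog, Bool.xor_assoc, Bool.xor_comm, Bool.xor_left_comm]
  C st s a b e d hs h1 h2 h3 h4 := by
    have := h.B0 (JantzenBlocks.tc st) b a s d e hs.symm
      (by simp [JantzenBlocks.tc, trp, h2]) (by simp [JantzenBlocks.tc, trp, h4])
      (by simp [JantzenBlocks.tc, trp, h1]) (by simp [JantzenBlocks.tc, trp, h3])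
    simp only [tc_tog, trp]
    convert this using 1
    funext q; simp only [tog, Bool.xor_assoc, Bool.xor_comm, Bool.xor_left_comm]

inductive Vx (R C : Type) : Type
  | r (s : R) : Vx R C
  | c (a : C) : Vx R C
  | o : Vx R C

def Edge {R C : Type} (st : Pos R C → Bool) : Vx R C → Vx R C → Prop
  | Vx.r s, Vx.c a => ∃ e, st (Pos.x s a e) = true
  | Vx.c a, Vx.r s => ∃ e, st (Pos.x s a e) = false
  | Vx.r s, Vx.o => st (Pos.z s) = true
  | Vx.o, Vx.r s => st (Pos.z s) = false
  | Vx.o, Vx.c a => st (Pos.u a) = true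
  | Vx.c a, Vx.o => st (Pos.u a) = false
  | _, _ => False

def Rch {R C : Type} (st : Pos R C → Bool) : ℕ → Vx R C → Prop
  | 0, v => v = Vx.o
  | k+1, v => ∃ w, Rch st k w ∧ Edge st w v

def tvx {R C : Type} : Vx R C → Vx C R
  | Vx.r s => Vx.c s
  | Vx.c a => Vx.r a
  | Vx.o => Vx.o

theorem edge_tc {R C : Type} (st : Pos R C → Bool) (v w : Vx R C) (h : Edge st v w) :
    Edge (tc st) (tvx v) (tvx w) := by
  cases v <;> cases w <;> simp_all [Edge, tvx, tc, trp]

theorem edge_cmpl {R C : Type} (st : Pos R C → Bool) (v w : Vx R C) (h : Edge st v w) :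
    Edge (cmpl st) w v := by
  cases v <;> cases w <;> simp_all [Edge, cmpl]

theorem rch_tc {R C : Type} (st : Pos R C → Bool) (k : ℕ) (v : Vx R C) (h : Rch st k v) :
    Rch (tc st) k (tvx v) := by
  induction k generalizing v with
  | zero => simp only [Rch] at h; subst h; rfl
  | succ k ih =>
    obtain ⟨w, h1, h2⟩ := h
    exact ⟨_, ih _ h1, edge_tc _ _ _ h2⟩

theorem rch_mono {R C : Type} (st st' : Pos R C → Bool) (s : R) (k : ℕ)
    (he : ∀ v w, v ≠ Vx.r s → Edge st v w → Edge st' v w)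
    (hm : ∀ j < k, ¬ Rch st j (Vx.r s)) (v : Vx R C) (h : Rch st k v) : Rch st' k v := by
  induction k generalizing v with
  | zero => exact h
  | succ k ih =>
    obtain ⟨w, h1, h2⟩ := h
    refine ⟨w, ih (fun j hj => hm j (by omega)) _ h1, he _ _ ?_ h2⟩
    rintro rfl
    exact hm k (by omega) h1

def Concl {R C : Type} (E : (Pos R C → Bool) → (Pos R C → Bool) → Prop) (k : ℕ) : Prop :=
  ∀ st s a, st (Pos.x s a true) ≠ st (Pos.x s a false) → st (Pos.z s) = true →
    st (Pos.u a) = false → (Rch st k (Vx.r s) ∨ Rch st k (Vx.c a)) → E st (flp s a st)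

theorem bex {f : Bool → Bool} (h : f true ≠ f false) : ∃ e, f e = true ∧ f (!e) = false := by
  cases h1 : f true <;> cases h2 : f false
  · simp_all
  · exact ⟨false, by simp [*]⟩
  · exact ⟨true, by simp [*]⟩
  · simp_all

theorem flp_eq {R C : Type} (s : R) (a : C) (e : Bool) (st : Pos R C → Bool) :
    flp s a st = tog (Pos.x s a e) (tog (Pos.x s a (!e)) st) := by
  cases e
  · simp [flp, tog_comm]
  · simp [flp]

theorem step_row {R C : Type} {E : (Pos R C → Bool) → (Pos R C → Bool) → Prop} (hE : Moves E)
    (k : ℕ) (ih : ∀ k' < k, Concl E k') (st : Pos R C → Bool) (s : R) (a : C)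
    (h1 : st (Pos.x s a true) ≠ st (Pos.x s a false)) (hz : st (Pos.z s) = true)
    (hu : st (Pos.u a) = false) (hr : Rch st k (Vx.r s))
    (hmr : ∀ j < k, ¬ Rch st j (Vx.r s)) (hmc : ∀ j < k, ¬ Rch st j (Vx.c a)) :
    E st (flp s a st) := by
  obtain ⟨e, he1, he2⟩ := bex (f := fun e => st (Pos.x s a e)) h1

  rcases k with _ | k
  · simp [Rch] at hr
  obtain ⟨w, hw, hws⟩ := hr
  rcases w with s' | b | _
  · simp [Edge] at hws
  swap
  · simp [Edge, hz] at hws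
  have hba : a ≠ b := by rintro rfl; exact hmc k (by omega) hw
  have hba' := hba.symm
  -- the case n_s(b) = 1 given a flip of (s,b)
  have key1 : st (Pos.x s b true) ≠ st (Pos.x s b false) → E st (flp s b st) →
      E st (flp s a st) := by
    intro h2 h3
    refine hE.trans _ _ _ h3 ?_
    have := hE.D (flp s b st) s a b hba
      (by simpa [flp, tog, hba] using h1) (by
        revert h2; simp only [flp, tog]
        cases st (Pos.x s b true) <;> cases st (Pos.x s b false) <;> simp)
    convert this using 1
    funext q; simp only [flp, tog]
    have : ∀ x y z : Bool, xor (xor (xor (xor x y) z) y) z = x := by decide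
    rw [this]
  by_cases hub : st (Pos.u b) = true
  · by_cases h2 : st (Pos.x s b true) = st (Pos.x s b false)
    · -- n_s(b) = 0
      have hbf : ∀ d, st (Pos.x s b d) = false := by
        obtain ⟨d, hd⟩ := hws
        intro d'
        cases d <;> cases d' <;> simp_all
      have m1 := hE.C st s a b e true hba he1 (hbf _) hu hub
      have m2 := hE.C (tog (Pos.x s a e) (tog (Pos.x s b true) (tog (Pos.u a) (tog (Pos.u b) st))))
        s b a true (!e) hba' (by simp [tog, hbf, hba']) (by simp [tog, he2, hba])
        (by simp [tog, hub, hba']) (by simp [tog, hu, hba])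
      have m3 := hE.trans _ _ _ m1 m2
      rw [flp_eq s a e]
      convert m3 using 1
      funext q; simp only [tog]
      generalize decide (q = Pos.x s a e) = x1
      generalize decide (q = Pos.x s a !e) = x2
      generalize decide (q = Pos.x s b true) = x3
      generalize decide (q = Pos.u a) = x4
      generalize decide (q = Pos.u b) = x5
      generalize st q = x6
      revert x1 x2 x3 x4 x5 x6; decide
    · exact key1 h2 (hE.A _ _ _ h2 (by rw [hz, hub]))
  have hub : st (Pos.u b) = false := by simpa using hub
  by_cases h2 : st (Pos.x s b true) = st (Pos.x s b false)
  swap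
  · exact key1 h2 (ih k (by omega) st s b h2 hz hub (Or.inr hw))
  have hbf : ∀ d, st (Pos.x s b d) = false := by
    obtain ⟨d, hd⟩ := hws
    intro d'
    cases d <;> cases d' <;> simp_all
  rcases k with _ | k
  · simp [Rch] at hw
  obtain ⟨w, hw', hwb⟩ := hw
  rcases w with s' | b' | _
  rotate_left
  · simp [Edge] at hwb
  · simp [Edge, hub] at hwb
  have hss : s ≠ s' := by rintro rfl; exact hmr k (by omega) hw'
  have hss' := hss.symm
  obtain ⟨d, hd⟩ := hwb
  have haf : ∀ d, st (Pos.x s' a d) = false := by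
    intro d
    by_contra hcon
    refine hmc (k+1) (by omega) ⟨_, hw', d, by simpa using hcon⟩
  by_cases h3 : st (Pos.x s' b true) = st (Pos.x s' b false)
  · -- n_{s'}(b) = 2
    have hbt : ∀ d, st (Pos.x s' b d) = true := by
      intro d'
      cases d <;> cases d' <;> simp_all
    have m1 := hE.B1 st s s' a b e true e true hss hba rfl he1 (hbf _) (haf _) (hbt _)
    set st1 := tog (Pos.x s a e) (tog (Pos.x s b true) (tog (Pos.x s' a e) (tog (Pos.x s' b true) st)))
      with hst1
    have m2 : E st1 (flp s' a st1) := by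
      have hn : st1 (Pos.x s' a true) ≠ st1 (Pos.x s' a false) := by
        cases e <;> simp [hst1, tog, hss', hba, haf]
      by_cases hz' : st (Pos.z s') = true
      · refine ih k (by omega) st1 s' a hn (by simp [hst1, tog, hz']) (by simp [hst1, tog, hu])
          (Or.inl ?_)
        refine rch_mono st st1 s k ?_ (fun j hj => hmr j (by omega)) _ hw'
        intro v w hv hvw
        rcases v with r | c | _ <;> rcases w with r' | c' | _ <;> simp only [Edge] at hvw ⊢
        · have hrs : r ≠ s := by rintro rfl; exact hv rfl
          obtain ⟨f, hf⟩ := hvw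
          by_cases hr' : r = s'
          · subst hr'
            by_cases hc' : c' = b
            · subst hc'
              exact ⟨false, by simp [hst1, tog, hrs, hbt, hba']⟩
            · exact ⟨f, by
                have : c' ≠ a := by rintro rfl; simp [haf] at hf
                simp [hst1, tog, hrs, hf, this, hc']⟩
          · exact ⟨f, by simp [hst1, tog, hrs, hr', hf]⟩
        · simpa [hst1, tog] using hvw
        · obtain ⟨f, hf⟩ := hvw
          by_cases hc : c = a
          · subst hc
            by_cases hr : r' = s
            · subst hr
              exact ⟨!e, by simp [hst1, tog, hss, hba, he2]⟩
            · by_cases hr2 : r' = s'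
              · subst hr2
                exact ⟨!e, by simp [hst1, tog, hss', hba, haf]⟩
              · exact ⟨f, by simp [hst1, tog, hr, hr2, hf]⟩
          · by_cases hc2 : c = b
            · subst hc2
              by_cases hr : r' = s
              · subst hr
                exact ⟨false, by simp [hst1, tog, hss, hba', hbf]⟩
              · by_cases hr2 : r' = s'
                · subst hr2
                  exact ⟨true, by simp [hst1, tog, hss', hba', hbt]⟩
                · exact ⟨f, by simp [hst1, tog, hr, hr2, hf]⟩
            · exact ⟨f, by simp [hst1, tog, hc, hc2, hf]⟩
        · simpa [hst1, tog] using hvw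
        · simpa [hst1, tog] using hvw
        · simpa [hst1, tog] using hvw
      · refine hE.A _ _ _ hn ?_
        simp [hst1, tog, hu, hz']
    have m3 := hE.B1 (flp s' a st1) s s' b a true (!e) true (!e) hss hba' rfl
      (by simp [flp, hst1, tog, hss, hba', hbf]) (by simp [flp, hst1, tog, hss, hba, he2])
      (by simp [flp, hst1, tog, hss', hba', hbt])
      (by cases e <;> simp [flp, hst1, tog, hss', hba, haf])
    have m4 := hE.trans _ _ _ (hE.trans _ _ _ m1 m2) m3
    rw [flp_eq s a e]
    rw [flp_eq s' a e, hst1] at m4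
    convert m4 using 1
    funext q; simp only [tog]
    generalize decide (q = Pos.x s a e) = x1
    generalize decide (q = Pos.x s a !e) = x2
    generalize decide (q = Pos.x s b true) = x3
    generalize decide (q = Pos.x s' a e) = x4
    generalize decide (q = Pos.x s' a !e) = x5
    generalize decide (q = Pos.x s' b true) = x7
    generalize st q = x6
    revert x1 x2 x3 x4 x5 x6 x7; decide
  · -- n_{s'}(b) = 1
    have m1 : E st (flp s' b st) := by
      by_cases hz' : st (Pos.z s') = true
      · exact ih k (by omega) st s' b h3 hz' hub (Or.inl hw')
      · exact hE.A _ _ _ h3 (by simp [hub, hz'])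
    obtain ⟨d, hd1, hd2⟩ := bex (f := fun e => st (Pos.x s' b e)) h3

    rw [flp_eq s' b d] at m1
    set st1 := tog (Pos.x s' b d) (tog (Pos.x s' b (!d)) st) with hst1
    have m2 := hE.B1 st1 s s' a b e (!d) e (!d) hss hba rfl
      (by simp [hst1, tog, hba, he1]) (by simp [hst1, tog, hss, hbf])
      (by simp [hst1, tog, hba, haf]) (by simp [hst1, tog, hd2])
    set st2 := tog (Pos.x s a e) (tog (Pos.x s b (!d)) (tog (Pos.x s' a e)
      (tog (Pos.x s' b (!d)) st1))) with hst2
    have m3 := hE.B1 st2 s s' b a (!d) (!e) d e hss hba' (by simp)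
      (by simp [hst2, hst1, tog, hss, hba', hbf]) (by simp [hst2, hst1, tog, hss, hba, he2])
      (by simp [hst2, hst1, tog, hss', hba', hd1])
      (by simp [hst2, hst1, tog, hss', hba, haf])
    have m4 := hE.trans _ _ _ (hE.trans _ _ _ m1 m2) m3
    rw [flp_eq s a e]
    rw [hst2, hst1] at m4
    convert m4 using 1
    funext q; simp only [tog]
    generalize decide (q = Pos.x s a e) = x1
    generalize decide (q = Pos.x s a !e) = x2
    generalize decide (q = Pos.x s b !d) = x3
    generalize decide (q = Pos.x s' a e) = x4
    generalize decide (q = Pos.x s' b d) = x5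
    generalize decide (q = Pos.x s' b !d) = x7
    generalize st q = x6
    revert x1 x2 x3 x4 x5 x6 x7; decide

theorem core (k : ℕ) : ∀ (R C : Type) (E : (Pos R C → Bool) → (Pos R C → Bool) → Prop),
    Moves E → Concl E k := by
  induction k using Nat.strong_induction_on with
  | _ k ih =>
  intro R C E hE st s a h1 hz hu hr
  by_cases hm : ∃ j < k, Rch st j (Vx.r s) ∨ Rch st j (Vx.c a)
  · obtain ⟨j, hj, h⟩ := hm
    exact ih j hj R C E hE st s a h1 hz hu h
  push Not at hm
  rcases hr with hr | hr
  · exact step_row hE k (fun j hj => ih j hj R C E hE) st s a h1 hz hu hr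
      (fun j hj => (hm j hj).1) (fun j hj => (hm j hj).2)
  · have hback : ∀ j v, Rch (tc st) j (tvx v) → Rch st j v := by
      intro j v h
      have := rch_tc _ _ _ h
      rw [tc_tc] at this
      have hv : tvx (tvx v) = v := by cases v <;> rfl
      rwa [hv] at this
    have := step_row hE.tc k (fun j hj => ih j hj C R _ hE.tc) (tc st) a s
      (by simpa [tc, trp] using h1) (by simp [tc, trp, hu]) (by simp [tc, trp, hz])
      (rch_tc _ _ _ hr)
      (fun j hj hh => (hm j hj).2 (hback j (Vx.c a) hh))
      (fun j hj hh => (hm j hj).1 (hback j (Vx.r s) hh))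
    simpa [tc_flp, tc_tc] using this

theorem abstract_main {R C : Type} {E : (Pos R C → Bool) → (Pos R C → Bool) → Prop}
    (hE : Moves E) (st : Pos R C → Bool) (s : R) (a : C)
    (h1 : st (Pos.x s a true) ≠ st (Pos.x s a false)) (hn : ¬ E st (flp s a st)) :
    ∃ T : Vx R C → Prop, (∀ v w, T v → Edge st v w → T w) ∧
      ((T Vx.o ∧ ¬ T (Vx.r s)) ∨ (¬ T Vx.o ∧ T (Vx.c a))) := by
  have hne : st (Pos.z s) ≠ st (Pos.u a) := fun h => hn (hE.A _ _ _ h1 h)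
  by_cases hz : st (Pos.z s) = true
  · have hu : st (Pos.u a) = false := by
      rw [hz] at hne; simpa using hne.symm
    refine ⟨fun v => ∃ k, Rch st k v, ?_, Or.inl ⟨⟨0, rfl⟩, ?_⟩⟩
    · rintro v w ⟨k, hk⟩ hvw
      exact ⟨k+1, v, hk, hvw⟩
    · rintro ⟨k, hk⟩
      exact hn (core k R C E hE st s a h1 hz hu (Or.inl hk))
  · have hz : st (Pos.z s) = false := by simpa using hz
    have hu : st (Pos.u a) = true := by
      rw [hz] at hne; simpa using hne.symm
    refine ⟨fun v => ¬ ∃ k, Rch (cmpl st) k v, ?_, Or.inr ⟨fun h => h ⟨0, rfl⟩, ?_⟩⟩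
    · rintro v w hv hvw ⟨k, hk⟩
      exact hv ⟨k+1, w, hk, edge_cmpl _ _ _ hvw⟩
    · rintro ⟨k, hk⟩
      refine hn ?_
      have := core k R C _ hE.cmpl (cmpl st) s a (by simpa [cmpl] using h1) (by simp [cmpl, hz])
        (by simp [cmpl, hu]) (Or.inr hk)
      simpa [cmpl_flp, cmpl_cmpl] using this

/-! ### Segments and reflections -/

noncomputable def sgf {n : ℕ} (I : Finset (Fin n)) (i : Fin n) : ℕ :=
  ((Finset.univ \ I).filter (fun q => q < i)).card

def Mv {n : ℕ} (I : Finset (Fin n)) : ℕ := (Finset.univ \ I).card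

theorem mval_eq (n : ℕ) (I : Finset (Fin n)) : mval n I = Mv I + 1 := by
  simp [mval, Qlist, Mv]

theorem sgf_mono {n : ℕ} (I : Finset (Fin n)) {i j : Fin n} (h : i ≤ j) : sgf I i ≤ sgf I j := by
  apply Finset.card_le_card
  intro q hq
  simp only [Finset.mem_filter] at hq ⊢
  exact ⟨hq.1, lt_of_lt_of_le hq.2 h⟩

theorem sgf_lt {n : ℕ} (I : Finset (Fin n)) {i j : Fin n} (hi : i ∉ I) (h : i < j) :
    sgf I i < sgf I j := by
  apply Finset.card_lt_card
  refine ⟨?_, ?_⟩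
  · intro q hq
    simp only [Finset.mem_filter] at hq ⊢
    exact ⟨hq.1, lt_trans hq.2 h⟩
  · intro hs
    have := @hs i (by simp [hi, h])
    simp at this

theorem sgf_le {n : ℕ} (I : Finset (Fin n)) (i : Fin n) : sgf I i ≤ Mv I :=
  Finset.card_le_card (Finset.filter_subset _ _)

theorem sgf_lt_Mv {n : ℕ} (I : Finset (Fin n)) {i : Fin n} (hi : i ∉ I) : sgf I i < Mv I := by
  apply Finset.card_lt_card
  refine ⟨Finset.filter_subset _ _, ?_⟩
  intro hs
  have := @hs i (by simp [hi])
  simp at this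

theorem mem_of_sgf_eq {n : ℕ} (I : Finset (Fin n)) {i j k : Fin n} (h : sgf I i = sgf I j)
    (h1 : i ≤ k) (h2 : k < j) : k ∈ I := by
  by_contra hk
  have := sgf_lt I hk h2
  have := sgf_mono I h1
  omega

theorem mem_of_sgf_last {n : ℕ} (I : Finset (Fin n)) {i k : Fin n} (h : sgf I i = Mv I)
    (h1 : i ≤ k) : k ∈ I := by
  by_contra hk
  have := sgf_lt_Mv I hk
  have := sgf_mono I h1
  omega

theorem sgf_eq_of_mem {n : ℕ} (I : Finset (Fin n)) {i j : Fin n} (hij : i ≤ j)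
    (h : ∀ k, i ≤ k → k < j → k ∈ I) : sgf I i = sgf I j := by
  unfold sgf
  congr 1
  ext q
  simp only [Finset.mem_filter, Finset.mem_sdiff, Finset.mem_univ, true_and]
  constructor
  · rintro ⟨h1, h2⟩; exact ⟨h1, lt_of_lt_of_le h2 hij⟩
  · rintro ⟨h1, h2⟩
    refine ⟨h1, ?_⟩
    by_contra h3
    exact h1 (h q (not_lt.mp h3) h2)

theorem sgf_last_of_mem {n : ℕ} (I : Finset (Fin n)) {i : Fin n}
    (h : ∀ k, i ≤ k → k ∈ I) : sgf I i = Mv I := by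
  unfold sgf Mv
  congr 1
  ext q
  simp only [Finset.mem_filter, Finset.mem_sdiff, Finset.mem_univ, true_and]
  constructor
  · rintro ⟨h1, h2⟩; exact h1
  · intro h1
    refine ⟨h1, ?_⟩
    by_contra h3
    exact h1 (h q (not_lt.mp h3))

theorem Qspec {n : ℕ} (I : Finset (Fin n)) (t : ℕ) (ht : t < Mv I) :
    ∃ k : Fin n, k ∉ I ∧ sgf I k = t ∧ (Qlist n I).getD t 0 = k.1 + 1 := by
  have hc : (Finset.univ \ I).card = Mv I := rfl
  set f := (Finset.univ \ I).orderEmbOfFin hc with hf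
  refine ⟨f ⟨t, ht⟩, ?_, ?_, ?_⟩
  · have := Finset.orderEmbOfFin_mem (Finset.univ \ I) hc ⟨t, ht⟩
    exact (Finset.mem_sdiff.mp this).2
  · have : (Finset.univ \ I).filter (fun q => q < f ⟨t, ht⟩) =
        (Finset.univ.filter (fun j : Fin (Mv I) => j < ⟨t, ht⟩)).image f := by
      ext q
      simp only [Finset.mem_filter, Finset.mem_image, Finset.mem_univ, true_and]
      constructor
      · rintro ⟨h1, h2⟩
        have : q ∈ Set.range f := by
          rw [hf, Finset.range_orderEmbOfFin]; exact_mod_cast h1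
        obtain ⟨j, rfl⟩ := this
        exact ⟨j, by simpa using h2, rfl⟩
      · rintro ⟨j, h1, rfl⟩
        exact ⟨Finset.orderEmbOfFin_mem _ _ _, by simpa using h1⟩
    unfold sgf
    rw [this, Finset.card_image_of_injective _ f.injective]
    have : (Finset.univ.filter (fun j : Fin (Mv I) => j < ⟨t, ht⟩)) = Finset.Iio ⟨t, ht⟩ := by
      ext; simp
    rw [this, Fin.card_Iio]
  · have hlen : t < ((Finset.univ \ I).sort (· ≤ ·)).length := by simpa [Mv] using ht
    rw [hf, Finset.orderEmbOfFin_apply]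
    simp only [Qlist]
    rw [List.getD_eq_getElem _ _ (by simpa [Mv] using ht)]
    simp

theorem qv_eq (n : ℕ) (ct : CType) (hct : ct ≠ CType.D) (I : Finset (Fin n)) (s : ℕ) :
    qv n ct I s = qval n I s := by
  have : StandardI n ct I := fun h => absurd h hct
  simp [qv, this]

theorem std_of {n : ℕ} {ct : CType} (hct : ct ≠ CType.D) (I : Finset (Fin n)) :
    StandardI n ct I := fun h => absurd h hct

theorem qv_zero (n : ℕ) (ct : CType) (hct : ct ≠ CType.D) (I : Finset (Fin n)) :
    qv n ct I 0 = 0 := by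
  rw [qv_eq n ct hct]; simp [qval]

theorem qv_last (n : ℕ) (ct : CType) (hct : ct ≠ CType.D) (I : Finset (Fin n)) :
    qv n ct I (Mv I + 1) = n := by
  rw [qv_eq n ct hct]; simp [qval, mval_eq]

theorem qv_mid (n : ℕ) (ct : CType) (hct : ct ≠ CType.D) (I : Finset (Fin n)) (t : ℕ)
    (ht : t < Mv I) :
    ∃ k : Fin n, k ∉ I ∧ sgf I k = t ∧ qv n ct I (t+1) = k.1 + 1 := by
  obtain ⟨k, h1, h2, h3⟩ := Qspec I t ht
  refine ⟨k, h1, h2, ?_⟩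
  rw [qv_eq n ct hct]; simp only [qval, mval_eq]
  simp [ht, ← h3]

theorem inSeg_iff (n : ℕ) (ct : CType) (hct : ct ≠ CType.D) (I : Finset (Fin n)) (s : ℕ)
    (hs : s ≤ Mv I) (i : Fin n) : InSeg n ct I (s+1) i ↔ sgf I i = s := by
  unfold InSeg
  simp only [Nat.add_sub_cancel]
  have hlow : qv n ct I s < i.1 + 1 ↔ s ≤ sgf I i := by
    rcases s with _ | s
    · simp [qv_zero n ct hct]
    · obtain ⟨k, h1, h2, h3⟩ := qv_mid n ct hct I s (by omega)
      rw [h3]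
      constructor
      · intro h
        have := sgf_lt I h1 (show k < i by rw [Fin.lt_def]; omega)
        omega
      · intro h
        by_contra hcon
        have := sgf_mono I (show i ≤ k by rw [Fin.le_def]; omega)
        omega
  have hup : i.1 + 1 ≤ qv n ct I (s+1) ↔ sgf I i ≤ s := by
    rcases Nat.lt_or_ge s (Mv I) with h | h
    · obtain ⟨k, h1, h2, h3⟩ := qv_mid n ct hct I s h
      rw [h3]
      constructor
      · intro h
        have := sgf_mono I (show i ≤ k by rw [Fin.le_def]; omega)
        omega
      · intro h
        by_contra hcon
        have := sgf_lt I h1 (show k < i by rw [Fin.lt_def]; omega)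
        omega
    · have : s = Mv I := by omega
      subst this
      rw [qv_last n ct hct]
      have := sgf_le I i
      have := i.2
      constructor <;> intro <;> omega
  rw [hlow, hup]; omega

theorem nsval_last (n : ℕ) (ct : CType) (hct : ct ≠ CType.D) (I : Finset (Fin n)) :
    nsval n ct I (mval n I) = (Finset.univ.filter (fun i : Fin n => sgf I i = Mv I)).card := by
  unfold nsval
  rw [mval_eq, qv_last n ct hct]
  simp only [Nat.add_sub_cancel]
  rcases hM : Mv I with _ | t
  · rw [qv_zero n ct hct]
    have : (Finset.univ.filter (fun i : Fin n => sgf I i = 0)) = Finset.univ := by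
      ext i
      have := sgf_le I i
      simp; omega
    rw [this]; simp
  · obtain ⟨k, h1, h2, h3⟩ := qv_mid n ct hct I t (by omega)
    rw [h3]
    have : (Finset.univ.filter (fun i : Fin n => sgf I i = t+1)) = Finset.Ioi k := by
      ext i
      simp only [Finset.mem_filter, Finset.mem_univ, true_and, Finset.mem_Ioi]
      constructor
      · intro h
        by_contra hcon
        have := sgf_mono I (not_lt.mp hcon)
        omega
      · intro h
        have := sgf_lt I h1 h
        have := sgf_le I i
        omega
    rw [this, Fin.card_Ioi]; omega

theorem nsl_eq (n : ℕ) (ct : CType) (hct : ct ≠ CType.D) (I : Finset (Fin n)) (lam : V n) (s : ℕ)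
    (hs : s ≤ Mv I) (a : ℝ) : nsl n ct I lam (s+1) a =
      (Finset.univ.filter (fun i : Fin n => sgf I i = s ∧ |lam i| = a)).card := by
  unfold nsl
  congr 1
  ext i
  simp [inSeg_iff n ct hct I s hs]

/-! reflections -/

theorem inn_ee {n : ℕ} (x : V n) (i : Fin n) : inn x (ee i) = x i := by
  simp [inn, ee, Pi.single_apply]

theorem inn_add {n : ℕ} (x y z : V n) : inn x (y + z) = inn x y + inn x z := by
  simp [inn, mul_add, Finset.sum_add_distrib]

theorem inn_neg {n : ℕ} (x y : V n) : inn x (-y) = - inn x y := by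
  simp [inn]

theorem inn_sub {n : ℕ} (x y z : V n) : inn x (y - z) = inn x y - inn x z := by
  rw [sub_eq_add_neg, inn_add, inn_neg, sub_eq_add_neg]

theorem inn_smul {n : ℕ} (c : ℝ) (x y : V n) : inn x (c • y) = c * inn x y := by
  simp [inn, Finset.mul_sum]; congr 1; ext; ring

theorem ee_apply {n : ℕ} (i j : Fin n) : (ee i : V n) j = if j = i then 1 else 0 := by
  simp [ee, Pi.single_apply]

theorem sRefl_sub {n : ℕ} (i j : Fin n) (h : i ≠ j) (x : V n) :
    sRefl (ee i - ee j) x = fun k => x (Equiv.swap i j k) := by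
  have h' := h.symm
  have h2 : inn (ee i - ee j : V n) (ee i - ee j) = 2 := by
    simp [inn_sub, inn_ee, ee_apply, h, h']; norm_num
  funext k
  simp only [sRefl, h2, inn_sub, inn_ee, Pi.sub_apply, Pi.smul_apply, ee_apply, smul_eq_mul,
    Equiv.swap_apply_def]
  by_cases h3 : k = i
  · subst h3; simp [h]
  · by_cases h4 : k = j
    · subst h4; simp [h']
    · simp [h3, h4]

theorem sRefl_add {n : ℕ} (i j : Fin n) (h : i ≠ j) (x : V n) :
    sRefl (ee i + ee j) x =
      Function.update (Function.update x i (-x j)) j (-x i) := by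
  have h' := h.symm
  have h2 : inn (ee i + ee j : V n) (ee i + ee j) = 2 := by
    simp [inn_add, inn_ee, ee_apply, h, h']; norm_num
  funext k
  simp only [sRefl, h2, inn_add, inn_ee, Pi.sub_apply, Pi.add_apply, Pi.smul_apply, ee_apply,
    smul_eq_mul, Function.update_apply]
  by_cases h3 : k = i
  · subst h3; simp [h]
  · by_cases h4 : k = j
    · subst h4; simp [h']
    · simp [h3, h4]

theorem sRefl_sub' {n : ℕ} (i j : Fin n) (h : i ≠ j) (x : V n) :
    sRefl (ee i - ee j) x =
      Function.update (Function.update x i (x j)) j (x i) := by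
  rw [sRefl_sub i j h]
  funext k
  simp only [Function.update_apply, Equiv.swap_apply_def]
  by_cases h3 : k = i
  · subst h3; simp [h]
  · by_cases h4 : k = j
    · subst h4; simp [h3]
    · simp [h3, h4]

theorem sRefl_ee {n : ℕ} (c : ℝ) (hc : c ≠ 0) (i : Fin n) (x : V n) :
    sRefl (c • ee i) x = Function.update x i (-x i) := by
  funext k
  simp only [sRefl, inn_smul, inn_ee, Pi.sub_apply, Pi.smul_apply, ee_apply,
    smul_eq_mul, Function.update_apply]
  by_cases h3 : k = i
  · subst h3; simp; field_simp; ring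
  · simp [h3]

theorem sRefl_ee' {n : ℕ} (i : Fin n) (x : V n) :
    sRefl (ee i) x = Function.update x i (-x i) := by
  have := sRefl_ee 1 one_ne_zero i x
  simpa using this

noncomputable def scl : CType → ℝ
  | CType.C => 2
  | _ => 1

theorem scl_pos (ct : CType) : 0 < scl ct := by cases ct <;> simp [scl]

theorem alpha_lt {n : ℕ} (ct : CType) (i : Fin n) (h : i.1 + 1 < n) :
    alphaR n ct i = ee i - ee ⟨i.1 + 1, h⟩ := by simp [alphaR, h]

theorem alpha_last {n : ℕ} {ct : CType} (hct : ct ≠ CType.D) (i : Fin n) (h : ¬ i.1 + 1 < n) :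
    alphaR n ct i = scl ct • ee i := by
  cases ct <;> simp_all [alphaR, scl]

theorem mem_Phi {n : ℕ} {ct : CType} (hct : ct ≠ CType.D) (v : V n) :
    v ∈ Phi n ct ↔ (v ∈ DRoots n ∨ ∃ i : Fin n, v = scl ct • ee i ∨ v = -(scl ct • ee i)) := by
  cases ct <;> simp_all [Phi, scl]

/-- combinatorial regularity -/
def CReg {n : ℕ} (I : Finset (Fin n)) (lam : V n) : Prop :=
  (∀ i j, i < j → sgf I i = sgf I j → lam i ≠ lam j) ∧
  (∀ i, sgf I i = Mv I → lam i ≠ 0) ∧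
  (∀ i j, i < j → sgf I i = Mv I → sgf I j = Mv I → lam i + lam j ≠ 0)

noncomputable def phq {n : ℕ} (q : Fin n) (v : V n) : ℝ := ∑ k, if k ≤ q then v k else 0

theorem phq_ee {n : ℕ} (q i : Fin n) : phq q (ee i) = if i ≤ q then 1 else 0 := by
  simp only [phq, ee_apply]
  rw [Finset.sum_eq_single i]
  · simp
  · intro b _ hb; simp [hb]
  · simp

theorem phq_add {n : ℕ} (q : Fin n) (v w : V n) : phq q (v + w) = phq q v + phq q w := by
  simp only [phq, ← Finset.sum_add_distrib]
  refine Finset.sum_congr rfl fun k _ => ?_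
  split_ifs <;> simp

theorem phq_smul {n : ℕ} (q : Fin n) (c : ℝ) (v : V n) : phq q (c • v) = c * phq q v := by
  simp only [phq, Finset.mul_sum]
  refine Finset.sum_congr rfl fun k _ => ?_
  split_ifs <;> simp

theorem phq_neg {n : ℕ} (q : Fin n) (v : V n) : phq q (-v) = - phq q v := by
  have := phq_smul q (-1) v
  simpa using this

theorem phq_sub {n : ℕ} (q : Fin n) (v w : V n) : phq q (v - w) = phq q v - phq q w := by
  rw [sub_eq_add_neg, phq_add, phq_neg, sub_eq_add_neg]

theorem phq_span {n : ℕ} {ct : CType} (hct : ct ≠ CType.D) (I : Finset (Fin n)) (q : Fin n)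
    (hq : q ∉ I) (v : V n)
    (hv : v ∈ Submodule.span ℝ (alphaR n ct '' (I : Set (Fin n)))) : phq q v = 0 := by
  induction hv using Submodule.span_induction with
  | mem x hx =>
    obtain ⟨j, hj, rfl⟩ := hx
    have hjq : j ≠ q := by rintro rfl; exact hq hj
    by_cases h : j.1 + 1 < n
    · rw [alpha_lt ct j h, phq_sub, phq_ee, phq_ee]
      have : j ≤ q ↔ (⟨j.1+1, h⟩ : Fin n) ≤ q := by
        simp only [Fin.le_def]
        have : j.1 ≠ q.1 := fun h => hjq (Fin.ext h)
        omega
      simp [this]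
    · rw [alpha_last hct j h, phq_smul, phq_ee]
      have : ¬ j ≤ q := by
        rw [Fin.le_def]
        have : j.1 ≠ q.1 := fun h => hjq (Fin.ext h)
        omega
      simp [this]
  | zero => simp [phq]
  | add x y _ _ hx hy => rw [phq_add, hx, hy, add_zero]
  | smul c x _ hx => rw [phq_smul, hx, mul_zero]

theorem sub_mem_span {n : ℕ} (ct : CType) (I : Finset (Fin n)) (d : ℕ) (i j : Fin n)
    (hd : j.1 = i.1 + d) (h : ∀ k, i ≤ k → k < j → k ∈ I) :
    (ee i - ee j : V n) ∈ Submodule.span ℝ (alphaR n ct '' (I : Set (Fin n))) := by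
  induction d generalizing j with
  | zero =>
    have : i = j := Fin.ext (by omega)
    subst this; simp
  | succ d ih =>
    have hlt : i.1 + d < n := by have := j.2; omega
    have h1 := ih ⟨i.1 + d, hlt⟩ rfl (fun k hk hk' => h k hk (by
      rw [Fin.lt_def] at hk' ⊢; simp at hk'; omega))
    have h2 : alphaR n ct ⟨i.1 + d, hlt⟩ = ee ⟨i.1+d, hlt⟩ - ee j := by
      rw [alpha_lt ct _ (by simp; have := j.2; omega)]
      congr 2; ext; simp; omega
    have h3 : (alphaR n ct ⟨i.1 + d, hlt⟩) ∈
        Submodule.span ℝ (alphaR n ct '' (I : Set (Fin n))) := by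
      apply Submodule.subset_span
      refine ⟨_, h _ ?_ ?_, rfl⟩
      · simp [Fin.le_def]
      · simp [Fin.lt_def]; omega
    rw [h2] at h3
    have := Submodule.add_mem _ h1 h3
    simpa using this

theorem ee_mem_span {n : ℕ} {ct : CType} (hct : ct ≠ CType.D) (I : Finset (Fin n)) (i : Fin n)
    (h : ∀ k, i ≤ k → k ∈ I) :
    (ee i : V n) ∈ Submodule.span ℝ (alphaR n ct '' (I : Set (Fin n))) := by
  have hn : n - 1 < n := by have := i.2; omega
  have h1 := sub_mem_span ct I (n - 1 - i.1) i ⟨n-1, hn⟩ (by simp; have := i.2; omega)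
    (fun k hk _ => h k hk)
  have h2 : alphaR n ct ⟨n-1, hn⟩ ∈ Submodule.span ℝ (alphaR n ct '' (I : Set (Fin n))) := by
    apply Submodule.subset_span
    exact ⟨_, h _ (by rw [Fin.le_def]; simp; have := i.2; omega), rfl⟩
  rw [alpha_last hct _ (by simp; omega)] at h2
  have h3 := Submodule.smul_mem _ (scl ct)⁻¹ h2
  rw [smul_smul, inv_mul_cancel₀ (scl_pos ct).ne', one_smul] at h3
  have := Submodule.add_mem _ h1 h3
  simpa using this

theorem creg_of_reg {n : ℕ} {ct : CType} (hct : ct ≠ CType.D) (I : Finset (Fin n)) (lam : V n)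
    (h : RegI n ct I lam) : CReg I lam := by
  refine ⟨?_, ?_, ?_⟩
  · intro i j hij hs he
    refine h (ee i - ee j) ⟨(mem_Phi hct _).2 (Or.inl ⟨i, j, hij.ne, Or.inr (Or.inl rfl)⟩), ?_⟩ ?_
    · exact sub_mem_span ct I (j.1 - i.1) i j (by rw [Fin.lt_def] at hij; omega)
        (fun k h1 h2 => mem_of_sgf_eq I hs h1 h2)
    · rw [inn_sub, inn_ee, inn_ee, he, sub_self]
  · intro i hs he
    refine h (scl ct • ee i) ⟨(mem_Phi hct _).2 (Or.inr ⟨i, Or.inl rfl⟩), ?_⟩ ?_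
    · exact Submodule.smul_mem _ _ (ee_mem_span hct I i (fun k hk => mem_of_sgf_last I hs hk))
    · rw [inn_smul, inn_ee, he, mul_zero]
  · intro i j hij hs hs' he
    refine h (ee i + ee j) ⟨(mem_Phi hct _).2 (Or.inl ⟨i, j, hij.ne, Or.inl rfl⟩), ?_⟩ ?_
    · exact Submodule.add_mem _ (ee_mem_span hct I i (fun k hk => mem_of_sgf_last I hs hk))
        (ee_mem_span hct I j (fun k hk => mem_of_sgf_last I hs' hk))
    · rw [inn_add, inn_ee, inn_ee, he]

/-- shape of the roots of Φ_I -/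
theorem sub_mem_PhiI {n : ℕ} {ct : CType} (hct : ct ≠ CType.D) (I : Finset (Fin n)) (i j : Fin n)
    (h : (ee i - ee j : V n) ∈ Submodule.span ℝ (alphaR n ct '' (I : Set (Fin n)))) :
    sgf I i = sgf I j := by
  rcases le_total i j with hij | hij
  · refine sgf_eq_of_mem I hij fun k h1 h2 => ?_
    by_contra hk
    have := phq_span hct I k hk _ h
    rw [phq_sub, phq_ee, phq_ee, if_pos h1, if_neg (not_le.mpr h2)] at this
    norm_num at this
  · refine (sgf_eq_of_mem I hij fun k h1 h2 => ?_).symm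
    by_contra hk
    have := phq_span hct I k hk _ h
    rw [phq_sub, phq_ee, phq_ee, if_pos h1, if_neg (not_le.mpr h2)] at this
    norm_num at this

theorem add_mem_PhiI {n : ℕ} {ct : CType} (hct : ct ≠ CType.D) (I : Finset (Fin n)) (i j : Fin n)
    (h : (ee i + ee j : V n) ∈ Submodule.span ℝ (alphaR n ct '' (I : Set (Fin n)))) :
    sgf I i = Mv I := by
  refine sgf_last_of_mem I fun k h1 => ?_
  by_contra hk
  have := phq_span hct I k hk _ h
  rw [phq_add, phq_ee, phq_ee, if_pos h1] at this
  split_ifs at this <;> norm_num at this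

theorem ee_mem_PhiI {n : ℕ} {ct : CType} (hct : ct ≠ CType.D) (I : Finset (Fin n)) (i : Fin n)
    (h : (scl ct • ee i : V n) ∈ Submodule.span ℝ (alphaR n ct '' (I : Set (Fin n)))) :
    sgf I i = Mv I := by
  refine sgf_last_of_mem I fun k h1 => ?_
  by_contra hk
  have := phq_span hct I k hk _ h
  rw [phq_smul, phq_ee, if_pos h1] at this
  have := scl_pos ct
  linarith

theorem reg_of_creg {n : ℕ} {ct : CType} (hct : ct ≠ CType.D) (I : Finset (Fin n)) (lam : V n)
    (h : CReg I lam) : RegI n ct I lam := by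
  obtain ⟨h1, h2, h3⟩ := h
  have h1' : ∀ i j, i ≠ j → sgf I i = sgf I j → lam i ≠ lam j := by
    intro i j hij hs
    rcases lt_or_gt_of_ne hij with h | h
    · exact h1 i j h hs
    · exact (h1 j i h hs.symm).symm
  have h3' : ∀ i j, i ≠ j → sgf I i = Mv I → sgf I j = Mv I → lam i + lam j ≠ 0 := by
    intro i j hij hs hs'
    rcases lt_or_gt_of_ne hij with h | h
    · exact h3 i j h hs hs'
    · rw [add_comm]; exact h3 j i h hs' hs
  rintro β ⟨hβ, hsp⟩ h0
  rw [mem_Phi hct] at hβ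
  rw [SetLike.mem_coe] at hsp
  rcases hβ with ⟨i, j, hij, rfl | rfl | rfl⟩ | ⟨i, rfl | rfl⟩
  · rw [inn_add, inn_ee, inn_ee] at h0
    exact h3' i j hij (add_mem_PhiI hct I i j hsp)
      (add_mem_PhiI hct I j i (by rwa [add_comm])) h0
  · rw [inn_sub, inn_ee, inn_ee] at h0
    exact h1' i j hij (sub_mem_PhiI hct I i j hsp) (by linarith)
  · have hsp' : (ee i + ee j : V n) ∈ Submodule.span ℝ (alphaR n ct '' (I : Set (Fin n))) := by
      have := Submodule.neg_mem _ hsp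
      rwa [show -(-ee i - ee j : V n) = ee i + ee j by abel] at this
    rw [inn_sub, inn_neg, inn_ee, inn_ee] at h0
    exact h3' i j hij (add_mem_PhiI hct I i j hsp')
      (add_mem_PhiI hct I j i (by rwa [add_comm])) (by linarith)
  · rw [inn_smul, inn_ee] at h0
    exact h2 i (ee_mem_PhiI hct I i hsp) (by
      rcases mul_eq_zero.mp h0 with h | h
      · exact absurd h (scl_pos ct).ne'
      · exact h)
  · rw [inn_neg, inn_smul, inn_ee, neg_eq_zero] at h0
    have hsp' := Submodule.neg_mem _ hsp
    rw [neg_neg] at hsp'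
    exact h2 i (ee_mem_PhiI hct I i hsp') (by
      rcases mul_eq_zero.mp h0 with h | h
      · exact absurd h (scl_pos ct).ne'
      · exact h)

theorem creg_of_plus {n : ℕ} {ct : CType} (hct : ct ≠ CType.D) (I : Finset (Fin n)) (lam : V n)
    (h : LamIPlus n ct I lam) : CReg I lam := by
  have hstep : ∀ (d : ℕ) (i j : Fin n), j.1 = i.1 + d → (∀ k, i ≤ k → k < j → k ∈ I) →
      lam j ≤ lam i ∧ (0 < d → lam j < lam i) := by
    intro d
    induction d with
    | zero =>
      intro i j hij _
      have : i = j := Fin.ext (by omega)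
      subst this; simp
    | succ d ih =>
      intro i j hij hk
      have hlt : i.1 + d < n := by have := j.2; omega
      have h1 := ih i ⟨i.1 + d, hlt⟩ rfl (fun k hk1 hk' => hk k hk1 (by
        rw [Fin.lt_def] at hk' ⊢; simp at hk'; omega))
      have h2 := h.2 ⟨i.1+d, hlt⟩ (hk _ (by simp [Fin.le_def]) (by simp [Fin.lt_def]; omega))
      rw [alpha_lt ct _ (by simp; have := j.2; omega), inn_sub, inn_ee, inn_ee] at h2
      have : (⟨i.1 + d + 1, by have := j.2; omega⟩ : Fin n) = j := by ext; simp; omega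
      simp only [this] at h2
      constructor
      · linarith [h1.1]
      · intro; linarith [h1.1]
  have hlast : ∀ i, sgf I i = Mv I → 0 < lam i := by
    intro i hs
    have hn : n - 1 < n := by have := i.2; omega
    have h1 := (hstep (n-1-i.1) i ⟨n-1, hn⟩ (by simp; have := i.2; omega)
      (fun k hk _ => mem_of_sgf_last I hs hk)).1
    have h2 := h.2 ⟨n-1, hn⟩ (mem_of_sgf_last I hs (by rw [Fin.le_def]; simp; have := i.2; omega))
    rw [alpha_last hct _ (by simp; omega), inn_smul, inn_ee] at h2
    have := (mul_pos_iff_of_pos_left (scl_pos ct)).1 h2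
    linarith
  refine ⟨?_, ?_, ?_⟩
  · intro i j hij hs
    have hij' := hij
    rw [Fin.lt_def] at hij'
    have := (hstep (j.1 - i.1) i j (by omega)
        (fun k h1 h2 => mem_of_sgf_eq I hs h1 h2)).2 (by omega)
    exact this.ne'
  · intro i hs; exact (hlast i hs).ne'
  · intro i j _ hs hs'
    have := hlast i hs
    have := hlast j hs'
    linarith

/-! ### Connecting lemmas -/

theorem exc_iff {n : ℕ} {ct : CType} (hct : ct ≠ CType.D) (I : Finset (Fin n)) (lam β : V n) :
    Exc n ct I lam β ↔ ExcBC n ct I (fun i => scl ct • ee i) lam β := by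
  cases ct <;> simp_all [Exc, scl]

theorem conn_of_linked {n : ℕ} {ct : CType} (hct : ct ≠ CType.D) (I : Finset (Fin n))
    (lam β : V n) (h1 : RegI n ct I lam) (h2 : RegI n ct I (sRefl β lam))
    (hp : β ∈ PhiPos n ct) (hI : β ∉ PhiI n ct I)
    (he : ¬ ExcBC n ct I (fun i => scl ct • ee i) lam β) : Conn n ct I lam (sRefl β lam) := by
  refine ⟨h1, h2, ?_⟩
  by_cases h : sRefl β lam = lam
  · rw [h]
  · refine Relation.ReflTransGen.single ⟨h1, h2, Or.inr ⟨β, ?_, Relation.ReflTransGen.refl⟩⟩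
    rw [LinkedRoot, if_pos (std_of hct I)]
    exact ⟨h1, hp, hI, h2, h, fun hh => he ((exc_iff hct I lam β).1 hh)⟩

theorem connPair {n : ℕ} {ct : CType} (hct : ct ≠ CType.D) (I : Finset (Fin n))
    (lam : V n) (i j : Fin n) (hij : i ≠ j) (σ : ℝ) (hσ : σ = 1 ∨ σ = -1)
    (h1 : RegI n ct I lam)
    (h2 : RegI n ct I (Function.update (Function.update lam i (σ * lam j)) j (σ * lam i)))
    (hs : sgf I i ≠ sgf I j ∨ (σ = -1 ∧ sgf I i < Mv I ∧ lam i ≠ 0 ∧ lam j ≠ 0))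
    (ha : |lam i| ≠ |lam j| ∨ (sgf I i < Mv I ∧ sgf I j < Mv I)) :
    Conn n ct I lam (Function.update (Function.update lam i (σ * lam j)) j (σ * lam i)) := by
  have key : ∀ i j : Fin n, i < j →
      RegI n ct I (Function.update (Function.update lam i (σ * lam j)) j (σ * lam i)) →
      (sgf I i ≠ sgf I j ∨ (σ = -1 ∧ sgf I i < Mv I ∧ lam i ≠ 0 ∧ lam j ≠ 0)) →
      (|lam i| ≠ |lam j| ∨ (sgf I i < Mv I ∧ sgf I j < Mv I)) →
      Conn n ct I lam (Function.update (Function.update lam i (σ * lam j)) j (σ * lam i)) := by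
    clear h2 hs ha hij i j
    intro i j hij h2 hs ha
    set β : V n := ee i - σ • ee j with hβ
    have hne := hij.ne
    have hrefl : sRefl β lam =
        Function.update (Function.update lam i (σ * lam j)) j (σ * lam i) := by
      rcases hσ with rfl | rfl
      · rw [hβ, one_smul, sRefl_sub' i j hne]; simp
      · rw [hβ, neg_one_smul, sub_neg_eq_add, sRefl_add i j hne]; simp
    have hσ0 : σ ≠ 0 := by rcases hσ with rfl | rfl <;> norm_num
    have hbi : β i = 1 := by simp [hβ, ee_apply, hne]
    have hbj : β j = -σ := by simp [hβ, ee_apply, hne.symm]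
    have hpair : ∀ i' j' : Fin n, ∀ τ : ℝ, β = ee i' + τ • ee j' →
        (i' = i ∧ j' = j) ∨ (i' = j ∧ j' = i) := by
      intro i' j' τ h
      have hi : i = i' ∨ i = j' := by
        by_contra hcon
        push Not at hcon
        rw [h] at hbi
        simp [ee_apply, hcon.1, hcon.2] at hbi
      have hj : j = i' ∨ j = j' := by
        by_contra hcon
        push Not at hcon
        rw [h] at hbj
        simp [ee_apply, hcon.1, hcon.2] at hbj
        exact hσ0 hbj
      grind
    rw [← hrefl] at h2 ⊢
    refine conn_of_linked hct I lam β h1 h2 ⟨?_, i, ?_, ?_⟩ ?_ ?_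
    · rw [mem_Phi hct]
      left
      refine ⟨i, j, hne, ?_⟩
      rcases hσ with rfl | rfl
      · right; left; rw [hβ, one_smul]
      · left; rw [hβ, neg_one_smul, sub_neg_eq_add]
    · rw [hbi]; norm_num
    · intro k hk
      simp [hβ, ee_apply, hk.ne, (hk.trans hij).ne]
    · rintro ⟨_, h⟩
      rw [SetLike.mem_coe] at h
      rcases hσ with rfl | rfl
      · rw [hβ, one_smul] at h
        have := sub_mem_PhiI hct I i j h
        rcases hs with hs | hs
        · exact hs this
        · norm_num at hs
      · rw [hβ, neg_one_smul, sub_neg_eq_add] at h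
        have h5 := add_mem_PhiI hct I i j h
        have h6 := add_mem_PhiI hct I j i (by rwa [add_comm])
        rcases hs with hs | hs
        · omega
        · omega
    · rintro ⟨s, hs1, hs2, a, ha0, hna, hn0, hh⟩
      obtain ⟨t, rfl⟩ : ∃ t, s = t + 1 := ⟨s - 1, by omega⟩
      rw [mval_eq] at hs2 hh
      have ht : t < Mv I := by omega
      simp only [inSeg_iff n ct hct I t ht.le, inSeg_iff n ct hct I (Mv I) le_rfl] at hh
      have hshort : ∀ k, β ≠ scl ct • ee k := by
        intro k h
        have hi : i = k := by
          by_contra hcon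
          rw [h] at hbi
          simp [ee_apply, hcon] at hbi
        have hj : j = k := by
          by_contra hcon
          rw [h] at hbj
          simp [ee_apply, hcon] at hbj
          exact hσ0 hbj
        exact hne (hi.trans hj.symm)
      rcases hh with ⟨i', j', g1, g2, g3, g4, g5 | g5⟩ | ⟨i', j', g1, g2, g3, g5 | g5⟩ |
        ⟨i', j', g1, g2, g3, g5 | g5⟩
      · exact hshort _ g5
      · rcases hpair i' j' 1 (by simpa using g5) with ⟨rfl, rfl⟩ | ⟨rfl, rfl⟩
        · rcases hs with hs | hs
          · omega
          · exact hs.2.2.2 g4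
        · rcases hs with hs | hs
          · omega
          · exact hs.2.2.1 g4
      · exact hshort _ g5
      · have hab : |lam i'| = |lam j'| := by
          rcases g3 with ⟨h, h'⟩ | ⟨h, h'⟩ <;> simp [h, h']
        rcases hpair i' j' 1 (by simpa using g5) with ⟨rfl, rfl⟩ | ⟨rfl, rfl⟩
        · rcases ha with h | h
          · exact h hab
          · omega
        · rcases ha with h | h
          · exact h hab.symm
          · omega
      · exact hshort _ g5
      · have hab : |lam i'| = |lam j'| := by
          rcases g3 with ⟨h, h'⟩ | ⟨h, h'⟩ <;> simp [h, h']
        rcases hpair i' j' (-1) (by rw [g5, neg_one_smul, sub_eq_add_neg])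
          with ⟨rfl, rfl⟩ | ⟨rfl, rfl⟩
        · rcases ha with h | h
          · exact h hab
          · omega
        · rcases ha with h | h
          · exact h hab.symm
          · omega
  rcases lt_or_gt_of_ne hij with h | h
  · exact key i j h h2 hs ha
  · have hc : Function.update (Function.update lam i (σ * lam j)) j (σ * lam i) =
        Function.update (Function.update lam j (σ * lam i)) i (σ * lam j) := by
      funext k
      simp only [Function.update_apply]
      by_cases hk : k = i
      · subst hk; simp [hij]
      · simp [hk]
    rw [hc] at h2 ⊢
    refine key j i h h2 ?_ ?_
    · rcases hs with hs | ⟨hs, hs', h3, h4⟩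
      · exact Or.inl hs.symm
      · by_cases h5 : sgf I i = sgf I j
        · exact Or.inr ⟨hs, h5 ▸ hs', h4, h3⟩
        · exact Or.inl (Ne.symm h5)
    · rcases ha with h | h
      · exact Or.inl h.symm
      · exact Or.inr ⟨h.2, h.1⟩

theorem connFlip {n : ℕ} {ct : CType} (hct : ct ≠ CType.D) (I : Finset (Fin n))
    (lam : V n) (i : Fin n) 
    (h1 : RegI n ct I lam)
    (h2 : RegI n ct I (Function.update lam i (-lam i)))
    (hs : sgf I i < Mv I)
    (hne : nsl n ct I lam (sgf I i + 1) 0 + nsl n ct I lam (Mv I + 1) |lam i| ≠ 1) :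
    Conn n ct I lam (Function.update lam i (-lam i)) := by
  have hsc := scl_pos ct
  set β : V n := scl ct • ee i with hβ
  have hrefl : sRefl β lam = Function.update lam i (-lam i) := sRefl_ee _ hsc.ne' i lam
  rw [← hrefl] at h2 ⊢
  have hb : ∀ k, β k ≠ 0 → k = i := by
    intro k hk
    by_contra hcon
    exact hk (by simp [hβ, ee_apply, hcon])
  have hpair : ∀ i' j' : Fin n, ∀ τ : ℝ, i' ≠ j' → τ ≠ 0 → β ≠ ee i' + τ • ee j' := by
    intro i' j' τ hij hτ h
    have e1 := hb i' (by rw [h]; simp [ee_apply, hij])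
    have e2 := hb j' (by rw [h]; simp [ee_apply, hij.symm, hτ])
    exact hij (e1.trans e2.symm)
  refine conn_of_linked hct I lam β h1 h2 ⟨?_, i, ?_, ?_⟩ ?_ ?_
  · rw [mem_Phi hct]
    exact Or.inr ⟨i, Or.inl rfl⟩
  · simp [hβ, ee_apply, hsc]
  · intro k hk
    simp [hβ, ee_apply, hk.ne]
  · rintro ⟨_, h⟩
    rw [SetLike.mem_coe] at h
    have := ee_mem_PhiI hct I i h
    omega
  · rintro ⟨s, hs1, hs2, a, ha0, hna, hn0, hh⟩
    obtain ⟨t, rfl⟩ : ∃ t, s = t + 1 := ⟨s - 1, by omega⟩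
    rw [mval_eq] at hs2 hh hn0
    have ht : t < Mv I := by omega
    simp only [inSeg_iff n ct hct I t ht.le, inSeg_iff n ct hct I (Mv I) le_rfl] at hh
    have hshort : ∀ k, sgf I k = t → |lam k| = a → β ≠ scl ct • ee k := by
      intro k hk hka h
      have := hb k (by rw [h]; simp [ee_apply, hsc.ne'])
      subst this
      rw [hk, hka] at hne
      exact hne hn0
    rcases hh with ⟨i', j', g1, g2, g3, g4, g5 | g5⟩ | ⟨i', j', g1, g2, g3, g5 | g5⟩ |
      ⟨i', j', g1, g2, g3, g5 | g5⟩
    · exact hshort _ g1 g3 g5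
    · refine hpair i' j' 1 ?_ one_ne_zero (by simpa using g5)
      rintro rfl
      rw [g4] at g3; simp at g3; linarith
    · exact hshort _ g1 (by
        rcases g3 with ⟨h, h'⟩ | ⟨h, h'⟩ <;> simp [h, abs_of_pos ha0]) g5
    · refine hpair i' j' 1 ?_ one_ne_zero (by simpa using g5)
      rintro rfl
      omega
    · exact hshort _ g1 (by
        rcases g3 with ⟨h, h'⟩ | ⟨h, h'⟩ <;> simp [h, abs_of_pos ha0]) g5
    · refine hpair i' j' (-1) ?_ (by norm_num) (by rw [g5, neg_one_smul, sub_eq_add_neg])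
      rintro rfl
      omega

/-! W_I orbits -/

theorem wiorb_swap {n : ℕ} {ct : CType} (I : Finset (Fin n)) (d : ℕ) :
    ∀ (i j : Fin n) (lam : V n), j.1 = i.1 + d → (∀ k, i ≤ k → k < j → k ∈ I) →
    WIOrb n ct I lam (fun k => lam (Equiv.swap i j k)) := by
  induction d with
  | zero =>
    intro i j lam hij _
    have : i = j := Fin.ext (by omega)
    subst this
    simp only [Equiv.swap_self, Equiv.refl_apply]
    exact Relation.ReflTransGen.refl
  | succ d ih =>
    intro i j lam hij hk
    have hlt : i.1 + d < n := by have := j.2; omega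
    set p : Fin n := ⟨i.1 + d, hlt⟩ with hp
    have hpI : p ∈ I := hk p (by simp [hp, Fin.le_def]) (by simp [hp, Fin.lt_def]; omega)
    have hpj : p ≠ j := by
      intro h; have := congrArg Fin.val h; simp [hp] at this; omega
    have hal : alphaR n ct p = ee p - ee j := by
      rw [alpha_lt ct p (by simp [hp]; have := j.2; omega)]
      congr 2; ext; simp [hp]; omega
    have hstep : ∀ x : V n, WIOrb n ct I x (fun k => x (Equiv.swap p j k)) := by
      intro x
      refine Relation.ReflTransGen.single ⟨p, hpI, ?_⟩
      rw [hal, sRefl_sub p j hpj]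
    rcases Nat.eq_zero_or_pos d with h0 | h0
    · have : i = p := by ext; simp [hp, h0]
      rw [this]; exact hstep lam
    have hip : i ≠ p := by
      intro h; have := congrArg Fin.val h; simp [hp] at this; omega
    have hijn : i ≠ j := by
      intro h; have := congrArg Fin.val h; omega
    have h2 := ih i p (fun k => lam (Equiv.swap p j k)) rfl (fun k hk1 hk' => hk k hk1 (by
        rw [Fin.lt_def] at hk' ⊢; simp [hp] at hk'; omega))
    have h3 := hstep (fun k => lam (Equiv.swap p j (Equiv.swap i p k)))
    have h4 : WIOrb n ct I lam _ := ((hstep lam).trans h2).trans h3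
    have h5 : (fun k => lam (Equiv.swap i j k)) =
        (fun k => lam (Equiv.swap p j (Equiv.swap i p (Equiv.swap p j k)))) := by
      funext k
      congr 1
      have hji := hijn.symm
      have hpi := hip.symm
      by_cases e1 : k = i
      · subst e1
        rw [Equiv.swap_apply_left, Equiv.swap_apply_of_ne_of_ne hip hijn, Equiv.swap_apply_left,
          Equiv.swap_apply_left]
      · by_cases e2 : k = j
        · subst e2
          rw [Equiv.swap_apply_right, Equiv.swap_apply_right, Equiv.swap_apply_right,
            Equiv.swap_apply_of_ne_of_ne hip hijn]
        · rw [Equiv.swap_apply_of_ne_of_ne e1 e2]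
          by_cases e3 : k = p
          · rw [e3, Equiv.swap_apply_left, Equiv.swap_apply_of_ne_of_ne hji hpj.symm,
              Equiv.swap_apply_right]
          · rw [Equiv.swap_apply_of_ne_of_ne e3 e2, Equiv.swap_apply_of_ne_of_ne e1 e3,
              Equiv.swap_apply_of_ne_of_ne e3 e2]
    rw [h5]; exact h4

theorem wiorb_swap' {n : ℕ} {ct : CType} (I : Finset (Fin n)) (i j : Fin n) (lam : V n)
    (h : sgf I i = sgf I j) : WIOrb n ct I lam (fun k => lam (Equiv.swap i j k)) := by
  rcases le_total i j with hij | hij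
  · exact wiorb_swap I (j.1 - i.1) i j lam (by rw [Fin.le_def] at hij; omega)
      (fun k h1 h2 => mem_of_sgf_eq I h h1 h2)
  · rw [Equiv.swap_comm]
    exact wiorb_swap I (i.1 - j.1) j i lam (by rw [Fin.le_def] at hij; omega)
      (fun k h1 h2 => mem_of_sgf_eq I h.symm h1 h2)

theorem wiorb_flip {n : ℕ} {ct : CType} (hct : ct ≠ CType.D) (I : Finset (Fin n)) (i : Fin n)
    (lam : V n) (h : sgf I i = Mv I) : WIOrb n ct I lam (Function.update lam i (-lam i)) := by
  have hn : n - 1 < n := by have := i.2; omega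
  set p : Fin n := ⟨n-1, hn⟩ with hp
  have hip : i ≤ p := by rw [Fin.le_def]; simp [hp]; have := i.2; omega
  have hpI : p ∈ I := mem_of_sgf_last I h hip
  have hsp : sgf I i = sgf I p := by
    have := sgf_mono I hip
    have := sgf_le I p
    omega
  have h1 := wiorb_swap' (ct := ct) I i p lam hsp
  have h2 : WIOrb n ct I (fun k => lam (Equiv.swap i p k))
      (Function.update (fun k => lam (Equiv.swap i p k)) p (- lam i)) := by
    refine Relation.ReflTransGen.single ⟨p, hpI, ?_⟩
    rw [alpha_last hct p (by simp [hp]; omega), sRefl_ee _ (scl_pos ct).ne']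
    simp
  have h3 := wiorb_swap' (ct := ct) I i p 
    (Function.update (fun k => lam (Equiv.swap i p k)) p (- lam i)) hsp
  have h4 : WIOrb n ct I lam _ := (h1.trans h2).trans h3
  have h5 : Function.update lam i (-lam i) = (fun k =>
      Function.update (fun k => lam (Equiv.swap i p k)) p (- lam i) (Equiv.swap i p k)) := by
    funext k
    simp only [Function.update_apply, Equiv.swap_apply_eq_iff, Equiv.swap_apply_right,
      Equiv.swap_apply_self]
  rw [h5]; exact h4
/-! ### Weights and states -/

def Oc {n : ℕ} (I : Finset (Fin n)) {C : Type} (av : C → ℝ) (t : ℕ) (v : ℝ) :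
    Pos (Fin (Mv I)) C → Prop
  | Pos.x r c e => t = r.1 ∧ v = if e then av c else - av c
  | Pos.z r => t = r.1 ∧ v = 0
  | Pos.u c => t = Mv I ∧ |v| = av c

structure AvOK {C : Type} (av : C → ℝ) : Prop where
  pos : ∀ c, 0 < av c
  inj : ∀ c d, av c = av d → c = d

theorem oc_fun {n : ℕ} {I : Finset (Fin n)} {C : Type} {av : C → ℝ} (hav : AvOK av) {t : ℕ} {v : ℝ}
    {p q : Pos (Fin (Mv I)) C} (hp : Oc I av t v p) (hq : Oc I av t v q) : p = q := by
  rcases p with ⟨r, c, e⟩ | r | c <;> rcases q with ⟨r', c', e'⟩ | r' | c' <;>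
    simp only [Oc] at hp hq
  · obtain ⟨h1, h2⟩ := hp
    obtain ⟨h3, h4⟩ := hq
    have hr : r = r' := Fin.ext (by omega)
    have p1 := hav.pos c
    have p2 := hav.pos c'
    cases e <;> cases e' <;> simp at h2 h4
    · rw [hr, hav.inj c c' (by linarith)]
    · linarith
    · linarith
    · rw [hr, hav.inj c c' (by linarith)]
  · have p1 := hav.pos c
    cases e <;> simp at hp <;> linarith
  · have := r.2; omega
  · have p1 := hav.pos c'
    cases e' <;> simp at hq <;> linarith
  · rw [show r = r' from Fin.ext (by omega)]
  · have := r.2; omega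
  · have := r'.2; omega
  · have := r'.2; omega
  · rw [hav.inj c c' (by linarith)]

/-- the segment is determined by the position -/
theorem oc_seg {n : ℕ} {I : Finset (Fin n)} {C : Type} {av : C → ℝ} {t t' : ℕ} {v v' : ℝ}
    {p : Pos (Fin (Mv I)) C} (hp : Oc I av t v p) (hq : Oc I av t' v' p) :
    t = t' ∧ (v = v' ∨ (t = Mv I ∧ v' = -v)) := by
  rcases p with ⟨r, c, e⟩ | r | c <;> simp only [Oc] at hp hq
  · exact ⟨by omega, Or.inl (by rw [hp.2, hq.2])⟩
  · exact ⟨by omega, Or.inl (by rw [hp.2, hq.2])⟩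
  · refine ⟨by omega, ?_⟩
    have : |v| = |v'| := by rw [hp.2, hq.2]
    rcases abs_eq_abs.mp this with h | h
    · exact Or.inl h
    · exact Or.inr ⟨hp.1, by linarith⟩

structure Good {n : ℕ} (I : Finset (Fin n)) {C : Type} (av : C → ℝ) (lam : V n) : Prop where
  ex : ∀ k, ∃ p, Oc I av (sgf I k) (lam k) p
  inj : ∀ k k' p, Oc I av (sgf I k) (lam k) p → Oc I av (sgf I k') (lam k') p → k = k'

noncomputable def stt {n : ℕ} (I : Finset (Fin n)) {C : Type} (av : C → ℝ) (lam : V n)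
    (p : Pos (Fin (Mv I)) C) : Bool := decide (∃ k, Oc I av (sgf I k) (lam k) p)

theorem stt_true {n : ℕ} {I : Finset (Fin n)} {C : Type} {av : C → ℝ} {lam : V n}
    {p : Pos (Fin (Mv I)) C} : stt I av lam p = true ↔ ∃ k, Oc I av (sgf I k) (lam k) p := by
  simp [stt]

theorem stt_false {n : ℕ} {I : Finset (Fin n)} {C : Type} {av : C → ℝ} {lam : V n}
    {p : Pos (Fin (Mv I)) C} : stt I av lam p = false ↔ ∀ k, ¬ Oc I av (sgf I k) (lam k) p := by
  simp [stt]

theorem good_creg {n : ℕ} {I : Finset (Fin n)} {C : Type} {av : C → ℝ} (hav : AvOK av) {lam : V n}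
    (h : Good I av lam) : CReg I lam := by
  refine ⟨?_, ?_, ?_⟩
  · intro i j hij hs he
    obtain ⟨p, hp⟩ := h.ex i
    exact hij.ne (h.inj i j p hp (by rwa [← hs, ← he]))
  · intro i hs he
    obtain ⟨p, hp⟩ := h.ex i
    rcases p with ⟨r, c, e⟩ | r | c <;> simp only [Oc] at hp
    · have := r.2; omega
    · have := r.2; omega
    · have := hav.pos c
      rw [he] at hp; simp at hp; linarith
  · intro i j hij hs hs' he
    obtain ⟨p, hp⟩ := h.ex i
    rcases p with ⟨r, c, e⟩ | r | c
    · simp only [Oc] at hp; have := r.2; omega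
    · simp only [Oc] at hp; have := r.2; omega
    · refine hij.ne (h.inj i j (Pos.u c) hp ⟨hs', ?_⟩)
      rw [← hp.2, show lam i = - lam j by linarith, abs_neg]

theorem good_of_creg {n : ℕ} {I : Finset (Fin n)} {C : Type} {av : C → ℝ} {lam : V n}
    (h : CReg I lam) (hr : ∀ k, lam k = 0 ∨ ∃ c, |lam k| = av c) : Good I av lam := by
  have hlt : ∀ k, sgf I k ≠ Mv I → sgf I k < Mv I := fun k hk => lt_of_le_of_ne (sgf_le I k) hk
  refine ⟨?_, ?_⟩
  · intro k
    by_cases hk : sgf I k = Mv I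
    · rcases hr k with h0 | ⟨c, hc⟩
      · exact absurd h0 (h.2.1 k hk)
      · exact ⟨Pos.u c, hk, hc⟩
    · rcases hr k with h0 | ⟨c, hc⟩
      · exact ⟨Pos.z ⟨_, hlt k hk⟩, rfl, h0⟩
      · rcases abs_choice (lam k) with h1 | h1
        · exact ⟨Pos.x ⟨_, hlt k hk⟩ c true, rfl, by simp; linarith⟩
        · exact ⟨Pos.x ⟨_, hlt k hk⟩ c false, rfl, by simp; linarith⟩
  · intro k k' p hp hq
    by_contra hne
    obtain ⟨h1, h2⟩ := oc_seg hp hq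
    rcases h2 with h2 | ⟨h2, h3⟩
    · rcases lt_or_gt_of_ne hne with hl | hl
      · exact h.1 k k' hl h1 h2
      · exact h.1 k' k hl h1.symm h2.symm
    · rcases lt_or_gt_of_ne hne with hl | hl
      · exact h.2.2 k k' hl h2 (h1 ▸ h2) (by linarith)
      · exact h.2.2 k' k hl (h1 ▸ h2) h2 (by linarith)

theorem good_update {n : ℕ} {I : Finset (Fin n)} {C : Type} {av : C → ℝ} (hav : AvOK av)
    {lam : V n} (h : Good I av lam) (i : Fin n) (v : ℝ) (p p' : Pos (Fin (Mv I)) C)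
    (hp : Oc I av (sgf I i) (lam i) p) (hp' : Oc I av (sgf I i) v p')
    (hf : stt I av lam p' = false) :
    Good I av (Function.update lam i v) ∧
      stt I av (Function.update lam i v) = tog p' (tog p (stt I av lam)) := by
  rw [stt_false] at hf
  have hne : p ≠ p' := fun e => hf i (e ▸ hp)
  refine ⟨⟨?_, ?_⟩, ?_⟩
  · intro k
    by_cases hk : k = i
    · subst hk; exact ⟨p', by simpa using hp'⟩
    · simpa [hk] using h.ex k
  · intro k k' q h1 h2
    by_cases hk : k = i
    · by_cases hk' : k' = i
      · rw [hk, hk']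
      · subst hk
        simp [hk'] at h1 h2
        exact absurd (oc_fun hav h1 hp' ▸ h2) (hf k')
    · by_cases hk' : k' = i
      · subst hk'
        simp [hk] at h1 h2
        exact absurd (oc_fun hav h2 hp' ▸ h1) (hf k)
      · simp [hk, hk'] at h1 h2
        exact h.inj k k' q h1 h2
  · funext q
    by_cases hq' : q = p'
    · subst hq'
      have e1 : stt I av (Function.update lam i v) q = true :=
        stt_true.2 ⟨i, by simpa using hp'⟩
      have e2 : stt I av lam q = false := stt_false.2 hf
      simp [tog, e1, e2, hne.symm]
    · by_cases hq : q = p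
      · subst hq
        have e2 : stt I av lam q = true := stt_true.2 ⟨i, hp⟩
        have e1 : stt I av (Function.update lam i v) q = false := by
          rw [stt_false]
          intro k hk
          by_cases hki : k = i
          · subst hki
            simp at hk
            exact hq' (oc_fun hav hk hp')
          · simp [hki] at hk
            exact hki (h.inj k i q hk hp)
        simp [tog, e1, e2, hne]
      · simp only [tog, hq, hq', decide_false, Bool.xor_false]
        rw [Bool.eq_iff_iff, stt_true, stt_true]
        constructor
        · rintro ⟨k, hk⟩
          by_cases hki : k = i
          · subst hki
            simp at hk
            exact absurd (oc_fun hav hk hp') hq'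
          · exact ⟨k, by simpa [hki] using hk⟩
        · rintro ⟨k, hk⟩
          by_cases hki : k = i
          · subst hki
            exact absurd (oc_fun hav hk hp) hq
          · exact ⟨k, by simpa [hki] using hk⟩

theorem good_perm {n : ℕ} {I : Finset (Fin n)} {C : Type} {av : C → ℝ}
    {lam : V n} (h : Good I av lam) (π : Equiv.Perm (Fin n)) (hπ : ∀ k, sgf I (π k) = sgf I k) :
    Good I av (fun k => lam (π k)) ∧ stt I av (fun k => lam (π k)) = stt I av lam := by
  refine ⟨⟨?_, ?_⟩, ?_⟩
  · intro k
    have := h.ex (π k)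
    rwa [hπ] at this
  · intro k k' p h1 h2
    rw [← hπ] at h1 h2
    exact π.injective (h.inj _ _ p h1 h2)
  · funext p
    rw [Bool.eq_iff_iff, stt_true, stt_true]
    constructor
    · rintro ⟨k, hk⟩
      rw [← hπ] at hk
      exact ⟨_, hk⟩
    · rintro ⟨k, hk⟩
      refine ⟨π.symm k, ?_⟩
      rw [← hπ]; simpa using hk

theorem wiorb_signs {n : ℕ} {ct : CType} (hct : ct ≠ CType.D) (I : Finset (Fin n)) (lam mu : V n)
    (h : ∀ k, lam k = mu k ∨ (sgf I k = Mv I ∧ mu k = - lam k)) : WIOrb n ct I lam mu := by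
  have key : ∀ F : Finset (Fin n), WIOrb n ct I lam (fun k => if k ∈ F then mu k else lam k) := by
    intro F
    induction F using Finset.induction_on with
    | empty => simp; exact Relation.ReflTransGen.refl
    | insert a F ha ih =>
      rcases h a with h1 | ⟨h1, h2⟩
      · have : (fun k => if k ∈ insert a F then mu k else lam k) =
            (fun k => if k ∈ F then mu k else lam k) := by
          funext k
          by_cases hk : k = a
          · subst hk; simp [ha, h1]
          · simp [hk]
        rw [this]; exact ih
      · have h3 := wiorb_flip hct I a (fun k => if k ∈ F then mu k else lam k) h1
        have : (fun k => if k ∈ insert a F then mu k else lam k) =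
            Function.update (fun k => if k ∈ F then mu k else lam k) a
              (-(if a ∈ F then mu a else lam a)) := by
          funext k
          by_cases hk : k = a
          · subst hk; simp [ha, h2]
          · simp [hk]
        rw [this]; exact ih.trans h3
  have := key Finset.univ
  simpa using this

theorem wiorb_of_stt {n : ℕ} {ct : CType} (hct : ct ≠ CType.D) {I : Finset (Fin n)} {C : Type}
    {av : C → ℝ} (hav : AvOK av) (mu : V n) (hmu : Good I av mu) (N : ℕ) : ∀ (lam : V n),
    Good I av lam → stt I av lam = stt I av mu →
    (Finset.univ.filter (fun k => ¬ ∃ p, Oc I av (sgf I k) (lam k) p ∧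
      Oc I av (sgf I k) (mu k) p)).card ≤ N → WIOrb n ct I lam mu := by
  induction N with
  | zero =>
    intro lam hg hst hN
    apply wiorb_signs hct
    intro k
    have h0 := Finset.card_eq_zero.mp (Nat.le_zero.mp hN)
    have hk : k ∉ (Finset.univ.filter (fun k => ¬ ∃ p, Oc I av (sgf I k) (lam k) p ∧
      Oc I av (sgf I k) (mu k) p)) := by rw [h0]; simp
    simp only [Finset.mem_filter, Finset.mem_univ, true_and, not_not] at hk
    obtain ⟨p, h1, h2⟩ := hk
    exact (oc_seg h1 h2).2
  | succ N ih =>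
    intro lam hg hst hN
    by_cases hall : ∀ k, ∃ p, Oc I av (sgf I k) (lam k) p ∧ Oc I av (sgf I k) (mu k) p
    · apply wiorb_signs hct
      intro k
      obtain ⟨p, h1, h2⟩ := hall k
      exact (oc_seg h1 h2).2
    · push Not at hall
      obtain ⟨k, hk⟩ := hall
      obtain ⟨p, hp⟩ := hmu.ex k
      have hs : stt I av lam p = true := by rw [hst]; exact stt_true.2 ⟨k, hp⟩
      obtain ⟨k', hk'⟩ := stt_true.1 hs
      have hkk : k ≠ k' := by rintro rfl; exact hk p hk' hp
      have hseg : sgf I k = sgf I k' := (oc_seg hp hk').1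
      have hπ : ∀ l, sgf I (Equiv.swap k k' l) = sgf I l := by
        intro l
        simp only [Equiv.swap_apply_def]
        split_ifs with h1 h2
        · rw [h1, hseg]
        · rw [h2, hseg]
        · rfl
      obtain ⟨g1, g2⟩ := good_perm hg (Equiv.swap k k') hπ
      refine (wiorb_swap' I k k' lam hseg).trans (ih _ g1 (g2.trans hst) ?_)
      rw [← Nat.lt_succ_iff]
      refine lt_of_lt_of_le (Finset.card_lt_card ?_) hN
      rw [Finset.ssubset_iff_of_subset]
      · refine ⟨k, ?_, ?_⟩
        · simpa using hk
        · simp only [Finset.mem_filter, Finset.mem_univ, true_and, not_not]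
          exact ⟨p, by rw [Equiv.swap_apply_left, hseg]; exact hk', hp⟩
      · intro l hl
        simp only [Finset.mem_filter, Finset.mem_univ, true_and] at hl ⊢
        by_cases h1 : l = k
        · subst h1; simpa using hk
        · by_cases h2 : l = k'
          · subst h2
            rintro ⟨q, hq1, hq2⟩
            rw [oc_fun hav hq1 hk'] at hq2
            exact hkk (hmu.inj _ _ p hp hq2)
          · rwa [Equiv.swap_apply_of_ne_of_ne h1 h2] at hl
/-! ### The move system -/

theorem tog4a {R C : Type} (q' q p' p : Pos R C) (st : Pos R C → Bool) :
    tog q' (tog q (tog p' (tog p st))) = tog p (tog p' (tog q (tog q' st))) := by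
  funext r
  simp only [tog]
  generalize decide (r = p) = w1
  generalize decide (r = q) = w2
  generalize decide (r = p') = w3
  generalize decide (r = q') = w4
  generalize st r = w5
  revert w1 w2 w3 w4 w5
  decide

theorem tog4b {R C : Type} (q' q p' p : Pos R C) (st : Pos R C → Bool) :
    tog q' (tog q (tog p' (tog p st))) = tog p (tog q' (tog q (tog p' st))) := by
  funext r
  simp only [tog]
  generalize decide (r = p) = w1
  generalize decide (r = q) = w2
  generalize decide (r = p') = w3
  generalize decide (r = q') = w4
  generalize st r = w5
  revert w1 w2 w3 w4 w5
  decide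

theorem tog4c {R C : Type} (q' q p' p : Pos R C) (st : Pos R C → Bool) :
    tog q' (tog q (tog p' (tog p st))) = tog p (tog p' (tog q' (tog q st))) := by
  funext r
  simp only [tog]
  generalize decide (r = p) = w1
  generalize decide (r = q) = w2
  generalize decide (r = p') = w3
  generalize decide (r = q') = w4
  generalize st r = w5
  revert w1 w2 w3 w4 w5
  decide

theorem card_oc {n : ℕ} {I : Finset (Fin n)} {C : Type} {av : C → ℝ}
    {lam : V n} (h : Good I av lam) (p : Pos (Fin (Mv I)) C) :
    (Finset.univ.filter (fun k => Oc I av (sgf I k) (lam k) p)).card = (stt I av lam p).toNat := by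
  cases hs : stt I av lam p with
  | false =>
    rw [stt_false] at hs
    simp [hs]
  | true =>
    obtain ⟨k, hk⟩ := stt_true.1 hs
    simp only [Bool.toNat_true]
    rw [Finset.card_eq_one]
    refine ⟨k, ?_⟩
    ext l
    simp only [Finset.mem_filter, Finset.mem_univ, true_and, Finset.mem_singleton]
    constructor
    · intro hl; exact h.inj l k p hl hk
    · rintro rfl; exact hk

theorem nsl_z {n : ℕ} {ct : CType} (hct : ct ≠ CType.D) {I : Finset (Fin n)} {C : Type}
    {av : C → ℝ} {lam : V n} (h : Good I av lam) (r : Fin (Mv I)) :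
    nsl n ct I lam (r.1 + 1) 0 = (stt I av lam (Pos.z r)).toNat := by
  rw [nsl_eq n ct hct I lam r.1 r.2.le, ← card_oc h]
  congr 1
  ext k
  rw [Finset.mem_filter, Finset.mem_filter]
  simp [Oc]

theorem nsl_u {n : ℕ} {ct : CType} (hct : ct ≠ CType.D) {I : Finset (Fin n)} {C : Type}
    {av : C → ℝ} {lam : V n} (h : Good I av lam) (c : C) :
    nsl n ct I lam (Mv I + 1) (av c) = (stt I av lam (Pos.u c)).toNat := by
  rw [nsl_eq n ct hct I lam (Mv I) le_rfl, ← card_oc h]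
  congr 1
  ext k
  rw [Finset.mem_filter, Finset.mem_filter]
  simp [Oc]

theorem nsl_x {n : ℕ} {ct : CType} (hct : ct ≠ CType.D) {I : Finset (Fin n)} {C : Type}
    {av : C → ℝ} (hav : AvOK av) {lam : V n} (h : Good I av lam) (r : Fin (Mv I)) (c : C) :
    nsl n ct I lam (r.1 + 1) (av c) =
      (stt I av lam (Pos.x r c true)).toNat + (stt I av lam (Pos.x r c false)).toNat := by
  rw [nsl_eq n ct hct I lam r.1 r.2.le, ← card_oc h, ← card_oc h, ← Finset.card_union_of_disjoint]
  · congr 1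
    ext k
    have := hav.pos c
    simp only [Finset.mem_filter, Finset.mem_univ, true_and, Finset.mem_union, Oc]
    rw [abs_eq this.le]
    simp
    tauto
  · rw [Finset.disjoint_left]
    intro k h1 h2
    simp only [Finset.mem_filter, Finset.mem_univ, true_and] at h1 h2
    have := oc_fun hav h1 h2
    simp at this

theorem conn_trans {n : ℕ} {ct : CType} {I : Finset (Fin n)} {a b c : V n}
    (h1 : Conn n ct I a b) (h2 : Conn n ct I b c) : Conn n ct I a c :=
  ⟨h1.1, h2.2.1, h1.2.2.trans h2.2.2⟩

def ERel {n : ℕ} (ct : CType) (I : Finset (Fin n)) {C : Type} (av : C → ℝ)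
    (X Y : Pos (Fin (Mv I)) C → Bool) : Prop :=
  ∀ lam, Good I av lam → stt I av lam = X →
    ∃ mu, Good I av mu ∧ stt I av mu = Y ∧ Conn n ct I lam mu

theorem erel_pair {n : ℕ} {ct : CType} (hct : ct ≠ CType.D) {I : Finset (Fin n)} {C : Type}
    {av : C → ℝ} (hav : AvOK av) {lam : V n} (h : Good I av lam)
    (i j : Fin n) (σ : ℝ) (hσ : σ = 1 ∨ σ = -1)
    (p q p' q' : Pos (Fin (Mv I)) C)
    (hp : Oc I av (sgf I i) (lam i) p) (hq : Oc I av (sgf I j) (lam j) q) (hpq : p ≠ q)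
    (hp' : Oc I av (sgf I i) (σ * lam j) p') (hq' : Oc I av (sgf I j) (σ * lam i) q')
    (hpq' : p' ≠ q') (hfp : stt I av lam p' = false) (hfq : stt I av lam q' = false)
    (hs : sgf I i ≠ sgf I j ∨ (σ = -1 ∧ sgf I i < Mv I ∧ lam i ≠ 0 ∧ lam j ≠ 0))
    (ha : |lam i| ≠ |lam j| ∨ (sgf I i < Mv I ∧ sgf I j < Mv I)) :
    ∃ mu, Good I av mu ∧ stt I av mu = tog q' (tog q (tog p' (tog p (stt I av lam)))) ∧
      Conn n ct I lam mu := by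
  have hij : i ≠ j := by
    rintro rfl
    exact hpq (oc_fun hav hp hq)
  obtain ⟨g1, g2⟩ := good_update hav h i (σ * lam j) p p' hp hp' hfp
  have hne : q' ≠ p := by
    rintro rfl
    rw [stt_true.2 ⟨i, hp⟩] at hfq
    simp at hfq
  obtain ⟨g3, g4⟩ := good_update hav g1 j (σ * lam i) q q' (by simpa [hij.symm] using hq) hq'
    (by rw [g2]; simp [tog, hfq, hpq'.symm, hne])
  refine ⟨_, g3, by rw [g4, g2], ?_⟩
  exact connPair hct I lam i j hij σ hσ (reg_of_creg hct I _ (good_creg hav h))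
    (reg_of_creg hct I _ (good_creg hav g3)) hs ha

def sg (e : Bool) : ℝ := if e then 1 else -1

theorem sg_mul (e d : Bool) : sg e * sg d = if xor e d then -1 else 1 := by
  cases e <;> cases d <;> simp [sg]

theorem sg_cases (e d : Bool) : sg e * sg d = 1 ∨ sg e * sg d = -1 := by
  cases e <;> cases d <;> simp [sg]

theorem oc_x {n : ℕ} {I : Finset (Fin n)} {C : Type} {av : C → ℝ} {t : ℕ} {v : ℝ}
    {r : Fin (Mv I)} {c : C} {e : Bool} :
    Oc I av t v (Pos.x r c e) ↔ t = r.1 ∧ v = sg e * av c := by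
  cases e <;> simp [Oc, sg]

theorem moves_ERel {n : ℕ} {ct : CType} (hct : ct ≠ CType.D) (I : Finset (Fin n)) {C : Type}
    {av : C → ℝ} (hav : AvOK av) : Moves (ERel ct I av) := by
  have hsq : ∀ e, sg e * sg e = 1 := by intro e; cases e <;> simp [sg]
  have hnot : ∀ e, sg (!e) = - sg e := by intro e; cases e <;> simp [sg]
  have hs0 : ∀ e, sg e ≠ 0 := by intro e; cases e <;> simp [sg]
  have hsa : ∀ e c, |sg e * av c| = av c := by
    intro e c
    cases e <;> simp [sg, abs_of_pos (hav.pos c)]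
  have hav0 : ∀ c, av c ≠ 0 := fun c => (hav.pos c).ne'
  refine ⟨?_, ?_, ?_, ?_, ?_, ?_, ?_, ?_⟩
  · intro st lam hg hst
    have := reg_of_creg hct I _ (good_creg hav hg)
    exact ⟨lam, hg, hst, this, this, Relation.ReflTransGen.refl⟩
  · intro X Y Z h1 h2 lam hg hst
    obtain ⟨mu, g1, g2, g3⟩ := h1 lam hg hst
    obtain ⟨nu, k1, k2, k3⟩ := h2 mu g1 g2
    exact ⟨nu, k1, k2, conn_trans g3 k3⟩
  · rintro _ s a hne hzu lam hg rfl
    obtain ⟨e, he, he'⟩ := bex (f := fun e => stt I av lam (Pos.x s a e)) hne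
    obtain ⟨i, hi⟩ := stt_true.1 he
    have hi2 := oc_x.1 hi
    obtain ⟨g1, g2⟩ := good_update hav hg i (-lam i) (Pos.x s a e) (Pos.x s a !e) hi
      (oc_x.2 ⟨hi2.1, by rw [hi2.2, hnot]; ring⟩) he'
    refine ⟨_, g1, ?_, ?_⟩
    · rw [g2, flp_eq s a e, tog_comm]
    · refine connFlip hct I lam i (reg_of_creg hct I _ (good_creg hav hg))
        (reg_of_creg hct I _ (good_creg hav g1)) (by rw [hi2.1]; exact s.2) ?_
      rw [hi2.1, hi2.2, hsa, nsl_z hct hg, nsl_u hct hg, hzu]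
      cases stt I av lam (Pos.u a) <;> simp
  · rintro _ s s' a hss hne hne' lam hg rfl
    obtain ⟨e, he, he'⟩ := bex (f := fun e => stt I av lam (Pos.x s a e)) hne
    obtain ⟨d, hd, hd'⟩ := bex (f := fun e => stt I av lam (Pos.x s' a e)) hne'
    obtain ⟨i, hi⟩ := stt_true.1 he
    obtain ⟨j, hj⟩ := stt_true.1 hd
    have hi2 := oc_x.1 hi
    have hj2 := oc_x.1 hj
    have hsv : s.1 ≠ s'.1 := fun h => hss (Fin.ext h)
    obtain ⟨mu, g1, g2, g3⟩ := erel_pair (ct := ct) hct hav hg i j (sg (!e) * sg d)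
      (sg_cases _ _) _ _
      (Pos.x s a !e) (Pos.x s' a !d) hi hj (by simp [hss])
      (oc_x.2 ⟨hi2.1, by rw [hj2.2]; linear_combination (sg (!e) * av a) * hsq d⟩)
      (oc_x.2 ⟨hj2.1, by
        rw [hi2.2, hnot, hnot]; linear_combination (-sg d * av a) * hsq e⟩)
      (by simp [hss]) he' hd' (Or.inl (by rw [hi2.1, hj2.1]; exact hsv))
      (Or.inr (by rw [hi2.1, hj2.1]; exact ⟨s.2, s'.2⟩))
    refine ⟨mu, g1, ?_, g3⟩
    rw [g2, flp_eq s a e, flp_eq s' a d]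
    exact tog4a _ _ _ _ _
  · rintro _ s a b hab hne hne' lam hg rfl
    obtain ⟨e, he, he'⟩ := bex (f := fun e => stt I av lam (Pos.x s a e)) hne
    obtain ⟨d, hd, hd'⟩ := bex (f := fun e => stt I av lam (Pos.x s b e)) hne'
    obtain ⟨i, hi⟩ := stt_true.1 he
    obtain ⟨j, hj⟩ := stt_true.1 hd
    have hi2 := oc_x.1 hi
    have hj2 := oc_x.1 hj
    obtain ⟨mu, g1, g2, g3⟩ := erel_pair (ct := ct) hct hav hg i j (-1) (Or.inr rfl) _ _
      (Pos.x s b !d) (Pos.x s a !e) hi hj (by simp [hab])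
      (oc_x.2 ⟨hi2.1, by rw [hj2.2, hnot]; ring⟩)
      (oc_x.2 ⟨hj2.1, by rw [hi2.2, hnot]; ring⟩)
      (by simp [hab.symm]) hd' he'
      (Or.inr ⟨rfl, by rw [hi2.1]; exact s.2, by rw [hi2.2]; exact mul_ne_zero (hs0 _) (hav0 _),
        by rw [hj2.2]; exact mul_ne_zero (hs0 _) (hav0 _)⟩)
      (Or.inr (by rw [hi2.1, hj2.1]; exact ⟨s.2, s.2⟩))
    refine ⟨mu, g1, ?_, g3⟩
    rw [g2, flp_eq s a e, flp_eq s b d]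
    exact tog4b _ _ _ _ _
  · rintro _ s s' a b e d e' d' hss hab hx h1 h2 h3 h4 lam hg rfl
    obtain ⟨i, hi⟩ := stt_true.1 h1
    obtain ⟨j, hj⟩ := stt_true.1 h4
    have hi2 := oc_x.1 hi
    have hj2 := oc_x.1 hj
    have hsv : s.1 ≠ s'.1 := fun h => hss (Fin.ext h)
    have hσ : sg d * sg d' = sg e * sg e' := by
      rw [sg_mul, sg_mul]
      revert hx
      cases e <;> cases d <;> cases e' <;> cases d' <;> simp
    obtain ⟨mu, g1, g2, g3⟩ := erel_pair (ct := ct) hct hav hg i j (sg d * sg d')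
      (sg_cases _ _) _ _
      (Pos.x s b d) (Pos.x s' a e') hi hj (by simp [hss])
      (oc_x.2 ⟨hi2.1, by rw [hj2.2]; linear_combination (sg d * av b) * hsq d'⟩)
      (oc_x.2 ⟨hj2.1, by rw [hi2.2, hσ]; linear_combination (sg e' * av a) * hsq e⟩)
      (by simp [hss]) h2 h3 (Or.inl (by rw [hi2.1, hj2.1]; exact hsv))
      (Or.inr (by rw [hi2.1, hj2.1]; exact ⟨s.2, s'.2⟩))
    refine ⟨mu, g1, ?_, g3⟩
    rw [g2]; exact tog4c _ _ _ _ _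
  · rintro _ s s' a e e' hss h1 h2 h3 h4 lam hg rfl
    obtain ⟨i, hi⟩ := stt_true.1 h1
    obtain ⟨j, hj⟩ := stt_true.1 h4
    have hi2 := oc_x.1 hi
    have hsv : s.1 ≠ s'.1 := fun h => hss (Fin.ext h)
    obtain ⟨mu, g1, g2, g3⟩ := erel_pair (ct := ct) hct hav hg i j (sg e * sg e')
      (sg_cases _ _) _ _
      (Pos.z s) (Pos.x s' a e') hi hj (by simp)
      ⟨hi2.1, by rw [hj.2]; ring⟩
      (oc_x.2 ⟨hj.1, by rw [hi2.2]; linear_combination (sg e' * av a) * hsq e⟩)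
      (by simp) h2 h3 (Or.inl (by rw [hi2.1, hj.1]; exact hsv))
      (Or.inr (by rw [hi2.1, hj.1]; exact ⟨s.2, s'.2⟩))
    refine ⟨mu, g1, ?_, g3⟩
    rw [g2]; exact tog4c _ _ _ _ _
  · rintro _ s a b e d hab h1 h2 h3 h4 lam hg rfl
    obtain ⟨i, hi⟩ := stt_true.1 h1
    obtain ⟨j, hj⟩ := stt_true.1 h4
    have hi2 := oc_x.1 hi
    obtain ⟨d', hd'⟩ : ∃ d', lam j = sg d' * av b := by
      rcases (abs_eq (hav.pos b).le).1 hj.2 with h | h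
      · exact ⟨true, by simp [sg, h]⟩
      · exact ⟨false, by simp [sg, h]⟩
    have hsl := s.2
    obtain ⟨mu, g1, g2, g3⟩ := erel_pair (ct := ct) hct hav hg i j (sg d * sg d')
      (sg_cases _ _) _ _
      (Pos.x s b d) (Pos.u a) hi hj (by simp)
      (oc_x.2 ⟨hi2.1, by rw [hd']; linear_combination (sg d * av b) * hsq d'⟩)
      ⟨hj.1, by
        rw [hi2.2, abs_mul, hsa]
        rcases sg_cases d d' with h | h <;> rw [h] <;> simp⟩
      (by simp) h2 h3 (Or.inl (by rw [hi2.1, hj.1]; omega))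
      (Or.inl (by
        rw [hi2.2, hsa, hj.2]
        exact fun h => hab (hav.inj _ _ h)))
    refine ⟨mu, g1, ?_, g3⟩
    rw [g2]; exact tog4c _ _ _ _ _

/-- main consequence -/
theorem main_T {n : ℕ} {ct : CType} (hct : ct ≠ CType.D) (I : Finset (Fin n)) {C : Type}
    {av : C → ℝ} (hav : AvOK av) (lam : V n) (hg : Good I av lam) (i : Fin n)
    (hregi : RegI n ct I (sRefl (ee i) lam))
    (hnc : ¬ Conn n ct I lam (sRefl (ee i) lam)) :
    ∃ T : Vx (Fin (Mv I)) C → Prop, (∀ v w, T v → Edge (stt I av lam) v w → T w) ∧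
      (∃ s : Fin (Mv I), ∃ a : C, (T Vx.o ∧ ¬ T (Vx.r s)) ∨ (¬ T Vx.o ∧ T (Vx.c a))) := by
  have hreg := reg_of_creg hct I _ (good_creg hav hg)
  rw [sRefl_ee'] at hregi hnc
  have hlast : sgf I i ≠ Mv I := by
    intro h
    exact hnc ⟨hreg, hregi, Relation.ReflTransGen.single
      ⟨hreg, hregi, Or.inl (wiorb_flip hct I i lam h)⟩⟩
  have h0 : lam i ≠ 0 := by
    intro h
    refine hnc ⟨hreg, hregi, ?_⟩
    have : Function.update lam i (-lam i) = lam := by rw [h, neg_zero, ← h]; simp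
    rw [this]
  obtain ⟨p, hp⟩ := hg.ex i
  rcases p with ⟨s, a, e⟩ | r | c
  · have hp2 := oc_x.1 hp
    have hcr := creg_of_reg hct I _ hregi
    have hf : stt I av lam (Pos.x s a !e) = false := by
      rw [stt_false]
      intro k hk
      have hk2 := oc_x.1 hk
      have hlk : lam k = - lam i := by
        rw [hk2.2, hp2.2]; cases e <;> simp [sg]
      have hki : k ≠ i := by
        rintro rfl
        exact h0 (by linarith)
      have hsk : sgf I k = sgf I i := by rw [hk2.1, hp2.1]
      rcases lt_or_gt_of_ne hki with h | h
      · exact hcr.1 k i h hsk (by simp [hki, hlk])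
      · exact hcr.1 i k h hsk.symm (by simp [hki, hlk])
    have ht : stt I av lam (Pos.x s a e) = true := stt_true.2 ⟨i, hp⟩
    obtain ⟨g1, g2⟩ := good_update hav hg i (-lam i) _ (Pos.x s a !e) hp
      (oc_x.2 ⟨hp2.1, by rw [hp2.2]; cases e <;> simp [sg]⟩) hf
    obtain ⟨T, hT, hor⟩ := abstract_main (moves_ERel (ct := ct) hct I hav) (stt I av lam) s a
      (by cases e <;> simp_all) (by
        intro hE
        obtain ⟨mu, k1, k2, k3⟩ := hE lam hg rfl
        refine hnc (conn_trans k3 ?_)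
        have hr := reg_of_creg hct I _ (good_creg hav k1)
        refine ⟨hr, hregi, Relation.ReflTransGen.single ⟨hr, hregi, Or.inl ?_⟩⟩
        refine wiorb_of_stt hct hav _ g1 _ mu k1 ?_ le_rfl
        rw [k2, g2, flp_eq s a e, tog_comm])
    exact ⟨T, hT, s, a, hor⟩
  · exact absurd hp.2 h0
  · exact absurd hp.1 hlast
/-! ### The dominant weight -/

theorem dom_chain {n : ℕ} {ct : CType} (lbar : V n) (hdom : DominantW n ct lbar)
    (J : Finset (Fin n)) (hJ : ∀ i : Fin n, i ∈ J ↔ inn lbar (alphaR n ct i) = 0) (d : ℕ) :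
    ∀ i j : Fin n, j.1 = i.1 + d → lbar j ≤ lbar i ∧
      ((∀ k, i ≤ k → k < j → k ∈ J) → lbar i = lbar j) := by
  induction d with
  | zero =>
    intro i j hij
    have : i = j := Fin.ext (by omega)
    subst this; simp
  | succ d ih =>
    intro i j hij
    have hlt : i.1 + d < n := by have := j.2; omega
    have h1 := ih i ⟨i.1 + d, hlt⟩ rfl
    have h2 := hdom ⟨i.1 + d, hlt⟩
    have h3 := hJ ⟨i.1 + d, hlt⟩
    have hj : (⟨i.1 + d + 1, by have := j.2; omega⟩ : Fin n) = j := by ext; simp; omega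
    rw [alpha_lt ct _ (by simp; have := j.2; omega), inn_sub, inn_ee, inn_ee] at h2 h3
    simp only [hj] at h2 h3
    constructor
    · linarith [h1.1]
    · intro hk
      have e1 := h1.2 (fun k hk1 hk' => hk k hk1 (by
        rw [Fin.lt_def] at hk' ⊢; simp at hk'; omega))
      have e2 := h3.1 (hk _ (by simp [Fin.le_def]) (by simp [Fin.lt_def]; omega))
      linarith

theorem dom_facts {n : ℕ} {ct : CType} (hct : ct ≠ CType.D) (lbar : V n)
    (hdom : DominantW n ct lbar)
    (J : Finset (Fin n)) (hJ : ∀ i : Fin n, i ∈ J ↔ inn lbar (alphaR n ct i) = 0) :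
    (∀ i j, sgf J i = sgf J j → lbar i = lbar j) ∧
    (∀ i j, sgf J i < sgf J j → lbar j < lbar i) ∧
    (∀ i, sgf J i = Mv J → lbar i = 0) ∧ (∀ i, sgf J i < Mv J → 0 < lbar i) := by
  have hanti : ∀ i j : Fin n, i ≤ j → lbar j ≤ lbar i := fun i j hij =>
    (dom_chain lbar hdom J hJ (j.1 - i.1) i j (by rw [Fin.le_def] at hij; omega)).1
  have heq : ∀ i j : Fin n, i ≤ j → (∀ k, i ≤ k → k < j → k ∈ J) → lbar i = lbar j :=
    fun i j hij =>
    (dom_chain lbar hdom J hJ (j.1 - i.1) i j (by rw [Fin.le_def] at hij; omega)).2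
  have hstep : ∀ (k : Fin n) (h : k.1 + 1 < n), k ∉ J → lbar ⟨k.1+1, h⟩ < lbar k := by
    intro k h hk
    have h2 := hdom k
    have h3 := hJ k
    rw [alpha_lt ct k h, inn_sub, inn_ee, inn_ee] at h2 h3
    refine lt_of_le_of_ne (by linarith) fun e => hk (h3.2 (by linarith))
  have hlast : ∀ k : Fin n, ¬ k.1 + 1 < n → 0 ≤ lbar k ∧ (k ∈ J ↔ lbar k = 0) := by
    intro k h
    have h2 := hdom k
    have h3 := hJ k
    rw [alpha_last hct k h, inn_smul, inn_ee] at h2 h3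
    have := scl_pos ct
    refine ⟨(mul_nonneg_iff_of_pos_left this).1 h2, h3.trans ?_⟩
    simp [this.ne']
  have hnn : ∀ i : Fin n, 0 ≤ lbar i := by
    intro i
    have hn : n - 1 < n := by have := i.2; omega
    exact (hlast ⟨n-1, hn⟩ (by simp; omega)).1.trans
      (hanti i ⟨n-1, hn⟩ (by rw [Fin.le_def]; simp; have := i.2; omega))
  refine ⟨?_, ?_, ?_, ?_⟩
  · intro i j h
    rcases le_total i j with hij | hij
    · exact heq i j hij (fun k h1 h2 => mem_of_sgf_eq J h h1 h2)
    · exact (heq j i hij (fun k h1 h2 => mem_of_sgf_eq J h.symm h1 h2)).symm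
  · intro i j h
    have hij : i ≤ j := by
      by_contra hcon
      have := sgf_mono J (not_le.mp hcon).le
      omega
    obtain ⟨k, h1, h2, h3⟩ : ∃ k, i ≤ k ∧ k < j ∧ k ∉ J := by
      by_contra hcon
      push Not at hcon
      have := sgf_eq_of_mem J hij hcon
      omega
    have hk1 : k.1 + 1 < n := by rw [Fin.lt_def] at h2; have := j.2; omega
    have a1 := hanti i k h1
    have a2 := hstep k hk1 h3
    have a3 := hanti ⟨k.1+1, hk1⟩ j (by rw [Fin.lt_def] at h2; rw [Fin.le_def]; simp; omega)
    linarith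
  · intro i h
    have hn : n - 1 < n := by have := i.2; omega
    have hip : i ≤ ⟨n-1, hn⟩ := by rw [Fin.le_def]; simp; have := i.2; omega
    rw [heq i ⟨n-1, hn⟩ hip (fun k h1 _ => mem_of_sgf_last J h h1)]
    exact (hlast ⟨n-1, hn⟩ (by simp; omega)).2.1 (mem_of_sgf_last J h hip)
  · intro i h
    obtain ⟨k, h1, h3⟩ : ∃ k, i ≤ k ∧ k ∉ J := by
      by_contra hcon
      push Not at hcon
      have := sgf_last_of_mem J hcon
      omega
    refine lt_of_lt_of_le ?_ (hanti i k h1)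
    by_cases hk : k.1 + 1 < n
    · exact lt_of_le_of_lt (hnn _) (hstep k hk h3)
    · have := hlast k hk
      exact lt_of_le_of_ne this.1 fun e => h3 (this.2.2 e.symm)

theorem aval_mid {n : ℕ} {ct : CType} (hct : ct ≠ CType.D) (J : Finset (Fin n)) (lbar : V n)
    (t : ℕ) (ht : t < Mv J) : ∃ k, sgf J k = t ∧ aval n ct J lbar (t+1) = lbar k := by
  obtain ⟨k, h1, h2, h3⟩ := qv_mid n ct hct J t ht
  refine ⟨k, h2, ?_⟩
  simp [aval, mval_eq, ht, h3]

theorem aval_last {n : ℕ} {ct : CType} (J : Finset (Fin n)) (lbar : V n) :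
    aval n ct J lbar (Mv J + 1) = 0 := by
  simp [aval, mval_eq]

theorem worb_perm {n : ℕ} {ct : CType} (hct : ct ≠ CType.D) (x y : V n) (h : WOrb n ct x y) :
    ∃ π : Equiv.Perm (Fin n), ∀ i, |y i| = |x (π i)| := by
  unfold WOrb WIOrb at h
  induction h with
  | refl => exact ⟨Equiv.refl _, fun i => rfl⟩
  | tail h1 h2 ih =>
    obtain ⟨π, hπ⟩ := ih
    obtain ⟨j, _, rfl⟩ := h2
    by_cases hj : j.1 + 1 < n
    · refine ⟨(Equiv.swap j ⟨j.1+1, hj⟩).trans π, fun i => ?_⟩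
      rw [alpha_lt ct j hj, sRefl_sub _ _ (by intro h; have := congrArg Fin.val h; simp at this),
        hπ]
      rfl
    · refine ⟨π, fun i => ?_⟩
      rw [alpha_last hct j hj, sRefl_ee _ (scl_pos ct).ne', ← hπ]
      by_cases hi : i = j
      · subst hi; simp
      · simp [hi]

/-! ### Saturation -/

def AP {R C : Type} (T : Vx R C → Prop) : Pos R C → Prop
  | Pos.x r _ _ => ¬ T (Vx.r r)
  | Pos.z r => ¬ T (Vx.r r)
  | Pos.u _ => ¬ T Vx.o

def BP {R C : Type} (T : Vx R C → Prop) : Pos R C → Prop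
  | Pos.x _ c _ => T (Vx.c c)
  | Pos.z _ => T Vx.o
  | Pos.u c => T (Vx.c c)

structure Sat {R C : Type} (T : Vx R C → Prop) (st : Pos R C → Bool) : Prop where
  full : ∀ p, AP T p → BP T p → st p = true
  emp : ∀ p, ¬ AP T p → ¬ BP T p → st p = false

theorem sat_of_closed {R C : Type} (T : Vx R C → Prop) (st : Pos R C → Bool)
    (h : ∀ v w, T v → Edge st v w → T w) : Sat T st := by
  constructor
  · rintro (⟨r, c, e⟩ | r | c) h1 h2 <;> simp only [AP, BP] at h1 h2 <;> by_contra h3 <;>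
      rw [Bool.not_eq_true] at h3
    · exact h1 (h _ (Vx.r r) h2 ⟨e, h3⟩)
    · exact h1 (h _ (Vx.r r) h2 h3)
    · exact h1 (h _ Vx.o h2 h3)
  · rintro (⟨r, c, e⟩ | r | c) h1 h2 <;> simp only [AP, BP, not_not] at h1 h2 <;>
      by_contra h3 <;> rw [Bool.not_eq_false] at h3
    · exact h2 (h _ (Vx.c c) h1 ⟨e, h3⟩)
    · exact h2 (h _ Vx.o h1 h3)
    · exact h2 (h _ (Vx.c c) h1 h3)

theorem sat_transfer {n : ℕ} {I : Finset (Fin n)} {C : Type} {av : C → ℝ} (hav : AvOK av)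
    (T : Vx (Fin (Mv I)) C → Prop) {lam mu : V n} (hl : Good I av lam) (hm : Good I av mu)
    (π : Equiv.Perm (Fin n)) (hπ : ∀ k, |mu k| = |lam (π k)|) (hs : Sat T (stt I av lam)) :
    Sat T (stt I av mu) := by
  let AI : Fin n → Prop := fun k => if h : sgf I k < Mv I then ¬ T (Vx.r ⟨_, h⟩) else ¬ T Vx.o
  let BV : ℝ → Prop := fun v => (v = 0 ∧ T Vx.o) ∨ ∃ c, |v| = av c ∧ T (Vx.c c)
  have hA : ∀ k v p, Oc I av (sgf I k) v p → (AP T p ↔ AI k) := by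
    rintro k v (⟨r, c, e⟩ | r | c) h
    · have h1 : sgf I k < Mv I := by rw [h.1]; exact r.2
      have h2 : (⟨sgf I k, h1⟩ : Fin (Mv I)) = r := Fin.ext h.1
      simp only [AP, AI, h1, dif_pos, h2]
    · have h1 : sgf I k < Mv I := by rw [h.1]; exact r.2
      have h2 : (⟨sgf I k, h1⟩ : Fin (Mv I)) = r := Fin.ext h.1
      simp only [AP, AI, h1, dif_pos, h2]
    · have h1 : ¬ sgf I k < Mv I := by rw [h.1]; exact lt_irrefl _
      simp only [AP, AI, h1, dif_neg, not_false_iff]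
  have hB : ∀ t v p, Oc I av t v p → (BP T p ↔ BV v) := by
    have aux : ∀ c v, |v| = av c → (T (Vx.c c) ↔ BV v) := by
      intro c v hv
      constructor
      · intro h; exact Or.inr ⟨c, hv, h⟩
      · rintro (⟨h0, _⟩ | ⟨d, hd, hT⟩)
        · have := hav.pos c
          rw [h0] at hv; simp at hv; linarith
        · rwa [hav.inj c d (by linarith)]
    rintro t v (⟨r, c, e⟩ | r | c) h
    · refine aux c v ?_
      have := hav.pos c
      rw [h.2]; cases e <;> simp [abs_of_pos this]
    · simp only [BP, BV]
      constructor
      · intro hT; exact Or.inl ⟨h.2, hT⟩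
      · rintro (⟨_, hT⟩ | ⟨c, hc, _⟩)
        · exact hT
        · have := hav.pos c
          rw [h.2] at hc; simp at hc; linarith
    · exact aux c v h.2
  have hBabs : ∀ v w : ℝ, |v| = |w| → (BV v ↔ BV w) := by
    intro v w h
    have : v = 0 ↔ w = 0 := by rw [← abs_eq_zero, h, abs_eq_zero]
    simp only [BV, h, this]
  -- counting
  let cAB : V n → ℕ := fun x => (Finset.univ.filter (fun k => AI k ∧ BV (x k))).card
  let cAN : V n → ℕ := fun x => (Finset.univ.filter (fun k => AI k ∧ ¬ BV (x k))).card
  let cNN : V n → ℕ := fun x => (Finset.univ.filter (fun k => ¬ AI k ∧ ¬ BV (x k))).card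
  have e1 : ∀ x, cAB x + cAN x = (Finset.univ.filter (fun k => AI k)).card := by
    intro x
    simp only [cAB, cAN]
    rw [← Finset.filter_filter, ← Finset.filter_filter]
    exact Finset.card_filter_add_card_filter_not _
  have e2 : ∀ x, cAN x + cNN x = (Finset.univ.filter (fun k => ¬ BV (x k))).card := by
    intro x
    simp only [cAN, cNN]
    rw [← Finset.card_filter_add_card_filter_not (s := Finset.univ.filter (fun k => ¬ BV (x k)))
      (fun k => AI k), Finset.filter_filter, Finset.filter_filter]
    congr 2 <;> (ext k; simp [and_comm])
  have e3 : (Finset.univ.filter (fun k => ¬ BV (mu k))).card =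
      (Finset.univ.filter (fun k => ¬ BV (lam k))).card := by
    refine Finset.card_bij (fun k _ => π k) ?_ ?_ ?_
    · intro k hk
      simp only [Finset.mem_filter, Finset.mem_univ, true_and] at hk ⊢
      rwa [← hBabs _ _ (hπ k)]
    · intro a _ b _ h; exact π.injective h
    · intro b hb
      simp only [Finset.mem_filter, Finset.mem_univ, true_and] at hb
      refine ⟨π.symm b, ?_, by simp⟩
      simp only [Finset.mem_filter, Finset.mem_univ, true_and]
      rw [hBabs _ _ (hπ _)]; simpa using hb
  have e4 : cNN lam = 0 := by
    simp only [cNN]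
    rw [Finset.card_eq_zero, Finset.filter_eq_empty_iff]
    rintro k - ⟨h1, h2⟩
    obtain ⟨p, hp⟩ := hl.ex k
    have := hs.emp p (by rwa [hA k _ p hp]) (by rwa [hB _ _ p hp])
    rw [stt_false] at this
    exact this k hp
  -- the injection
  have hex : ∀ k, AI k ∧ BV (mu k) → ∃ k', ∃ p, Oc I av (sgf I k) (mu k) p ∧
      Oc I av (sgf I k') (lam k') p := by
    rintro k ⟨h1, h2⟩
    obtain ⟨p, hp⟩ := hm.ex k
    have := hs.full p ((hA k _ p hp).2 h1) ((hB _ _ p hp).2 h2)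
    obtain ⟨k', hk'⟩ := stt_true.1 this
    exact ⟨k', p, hp, hk'⟩
  choose! f g hf1 hf2 using hex
  have hmaps : ∀ k ∈ Finset.univ.filter (fun k => AI k ∧ BV (mu k)),
      f k ∈ Finset.univ.filter (fun k => AI k ∧ BV (lam k)) := by
    intro k hk
    simp only [Finset.mem_filter, Finset.mem_univ, true_and] at hk ⊢
    have a1 := hf1 k hk
    have a2 := hf2 k hk
    exact ⟨(hA _ _ _ a2).1 ((hA _ _ _ a1).2 hk.1), (hB _ _ _ a2).1 ((hB _ _ _ a1).2 hk.2)⟩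
  have hinj : Set.InjOn f (Finset.univ.filter (fun k => AI k ∧ BV (mu k)) : Finset (Fin n)) := by
    intro k hk k' hk' he
    simp only [Finset.coe_filter, Finset.mem_univ, true_and, Set.mem_setOf_eq] at hk hk'
    have a2 := hf2 k hk
    have b2 := hf2 k' hk'
    rw [← he] at b2
    have := oc_fun hav a2 b2
    have a1 := hf1 k hk
    have b1 := hf1 k' hk'
    rw [← this] at b1
    exact hm.inj _ _ _ a1 b1
  have hle : cAB mu ≤ cAB lam := Finset.card_le_card_of_injOn f hmaps hinj
  have l1 := e1 lam
  have l2 := e2 lam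
  have m1 := e1 mu
  have m2 := e2 mu
  have hN : cNN mu = 0 := by omega
  have hABeq : cAB lam ≤ cAB mu := by omega
  have hsurj := Finset.surjOn_of_injOn_of_card_le f hmaps hinj hABeq
  constructor
  · intro p h1 h2
    obtain ⟨k', hk'⟩ := stt_true.1 (hs.full p h1 h2)
    have hmem : k' ∈ ((Finset.univ.filter (fun k => AI k ∧ BV (lam k)) : Finset (Fin n)) :
        Set (Fin n)) := by
      simp only [Finset.coe_filter, Finset.mem_univ, true_and, Set.mem_setOf_eq]
      exact ⟨(hA _ _ _ hk').1 h1, (hB _ _ _ hk').1 h2⟩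
    obtain ⟨k, hk, hfk⟩ := hsurj hmem
    simp only [Finset.coe_filter, Finset.mem_univ, true_and, Set.mem_setOf_eq] at hk
    have a2 := hf2 k hk
    rw [hfk] at a2
    have a1 := hf1 k hk
    rw [oc_fun hav a2 hk'] at a1
    exact stt_true.2 ⟨k, a1⟩
  · intro p h1 h2
    rw [stt_false]
    intro k hk
    simp only [cNN] at hN
    rw [Finset.card_eq_zero, Finset.filter_eq_empty_iff] at hN
    exact hN (Finset.mem_univ k) ⟨by rwa [← hA k _ p hk], by rwa [← hB _ _ p hk]⟩
/-! ### Conclusion -/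

theorem card_zero {n : ℕ} {I : Finset (Fin n)} {C : Type} {av : C → ℝ} {lam : V n}
    (hg : Good I av lam) (hz : ∀ r, stt I av lam (Pos.z r) = true)
    (hl : ∀ k, sgf I k ≠ Mv I) :
    (Finset.univ.filter (fun k : Fin n => lam k = 0)).card = Mv I := by
  rw [← Finset.card_range (Mv I)]
  refine Finset.card_bij (fun k _ => sgf I k) ?_ ?_ ?_
  · intro k _
    have := sgf_le I k
    have := hl k
    rw [Finset.mem_range]; omega
  · intro k hk k' hk' h
    simp only [Finset.mem_filter, Finset.mem_univ, true_and] at hk hk'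
    have h1 : sgf I k < Mv I := lt_of_le_of_ne (sgf_le I k) (hl k)
    exact hg.inj k k' (Pos.z ⟨sgf I k, h1⟩) ⟨rfl, hk⟩ ⟨h.symm, hk'⟩
  · intro t ht
    rw [Finset.mem_range] at ht
    obtain ⟨k, hk⟩ := stt_true.mp (hz ⟨t, ht⟩)
    exact ⟨k, by simpa using hk.2, hk.1⟩

theorem card_last {n : ℕ} {I : Finset (Fin n)} {N : ℕ} {av : Fin N → ℝ} {lam : V n}
    (hav : AvOK av) (hg : Good I av lam) (hu : ∀ c, stt I av lam (Pos.u c) = true) :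
    (Finset.univ.filter (fun k : Fin n => sgf I k = Mv I)).card = N := by
  choose f hf using fun c => stt_true.mp (hu c)
  have : Finset.univ.filter (fun k : Fin n => sgf I k = Mv I) = Finset.univ.image f := by
    ext k
    simp only [Finset.mem_filter, Finset.mem_univ, true_and, Finset.mem_image]
    constructor
    · intro hk
      obtain ⟨p, hp⟩ := hg.ex k
      rcases p with ⟨r, c, e⟩ | r | c
      · have := hp.1; have := r.2; omega
      · have := hp.1; have := r.2; omega
      · exact ⟨c, hg.inj _ _ _ (hf c) hp⟩
    · rintro ⟨c, rfl⟩
      exact (hf c).1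
  rw [this, Finset.card_image_of_injective]
  · simp
  · intro c d h
    have h1 := (hf c).2
    have h2 := (hf d).2
    rw [h] at h1
    exact hav.inj c d (by rw [← h1, ← h2])

theorem final {n : ℕ} {ct : CType} (hct : ct ≠ CType.D)
    (I J : Finset (Fin n)) (lam lbar : V n) (hreg : RegI n ct I lam)
    (horb : WOrb n ct lam lbar) (hdom : DominantW n ct lbar)
    (hJ : ∀ i : Fin n, i ∈ J ↔ inn lbar (alphaR n ct i) = 0)
    (i : Fin n) (hregi : RegI n ct I (sRefl (ee i) lam))
    (hnc : ¬ Conn n ct I lam (sRefl (ee i) lam))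
    (h1 : ¬ (nsval n ct I (mval n I) = 0 ∧ nsval n ct J (mval n J) = mval n I - 1))
    (h2 : ¬ (nsval n ct I (mval n I) = mval n J - 1 ∧ nsval n ct J (mval n J) = 0)) :
    StronglySepSys n ct I J lbar := by
  obtain ⟨d1, d2, d3, d4⟩ := dom_facts hct lbar hdom J hJ
  obtain ⟨av, hav_def⟩ : ∃ av : Fin (Mv J) → ℝ, ∀ c, av c = aval n ct J lbar (c.1+1) :=
    ⟨_, fun _ => rfl⟩
  have hav : AvOK av := by
    constructor
    · intro c
      obtain ⟨k, hk, hk'⟩ := aval_mid hct J lbar c.1 c.2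
      rw [hav_def, hk']
      exact d4 k (by rw [hk]; exact c.2)
    · intro c d h
      obtain ⟨k, hk, hk'⟩ := aval_mid hct J lbar c.1 c.2
      obtain ⟨l, hl, hl'⟩ := aval_mid hct J lbar d.1 d.2
      rw [hav_def, hav_def, hk', hl'] at h
      apply Fin.ext
      rcases lt_trichotomy c.1 d.1 with h3 | h3 | h3
      · have := d2 k l (by omega); linarith
      · exact h3
      · have := d2 l k (by omega); linarith
  have hb : ∀ k, lbar k = 0 ∨ ∃ c, |lbar k| = av c := by
    intro k
    rcases (sgf_le J k).lt_or_eq with h | h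
    · right
      obtain ⟨l, hl, hl'⟩ := aval_mid (ct := ct) hct J lbar _ h
      refine ⟨⟨_, h⟩, ?_⟩
      rw [hav_def, hl', abs_of_pos (d4 k h)]
      exact d1 k l hl.symm
    · exact Or.inl (d3 k h)
  obtain ⟨π, hπ⟩ := worb_perm hct lam lbar horb
  have hl : ∀ k, lam k = 0 ∨ ∃ c, |lam k| = av c := by
    intro k
    have h := hπ (π.symm k)
    rw [Equiv.apply_symm_apply] at h
    rcases hb (π.symm k) with h3 | ⟨c, h3⟩
    · left; rw [h3, abs_zero] at h; exact abs_eq_zero.mp h.symm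
    · right; exact ⟨c, by rw [← h, h3]⟩
  have hg : Good I av lam := good_of_creg (creg_of_reg hct I lam hreg) hl
  have hgm : ∀ mu, WOrb n ct lbar mu → CReg I mu → Good I av mu := by
    intro mu hm hc
    obtain ⟨ρ, hρ⟩ := worb_perm hct lbar mu hm
    refine good_of_creg hc fun k => ?_
    rcases hb (ρ k) with h3 | ⟨c, h3⟩
    · left; have := hρ k; rw [h3, abs_zero] at this; exact abs_eq_zero.mp this
    · right; exact ⟨c, by rw [hρ, h3]⟩
  obtain ⟨T, hT, s0, a0, hsa⟩ := main_T hct I hav lam hg i hregi hnc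
  have hsat := sat_of_closed T _ hT
  have hsm : ∀ mu, WOrb n ct lbar mu → CReg I mu → Sat T (stt I av mu) := by
    intro mu hm hc
    obtain ⟨ρ, hρ⟩ := worb_perm hct lam mu (Relation.ReflTransGen.trans horb hm)
    exact sat_transfer hav T hg (hgm mu hm hc) ρ hρ hsat
  obtain ⟨S, hSdef⟩ : ∃ S : Finset ℕ, S = (Finset.Icc 1 (Mv I + 1)).filter (fun s =>
      if h : s - 1 < Mv I then ¬ T (Vx.r ⟨s-1, h⟩) else ¬ T Vx.o) := ⟨_, rfl⟩
  obtain ⟨Sb, hSbdef⟩ : ∃ S : Finset ℕ, S = (Finset.Icc 1 (Mv J + 1)).filter (fun s =>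
      if h : s - 1 < Mv J then T (Vx.c ⟨s-1, h⟩) else T Vx.o) := ⟨_, rfl⟩
  have hSr : ∀ r : Fin (Mv I), r.1 + 1 ∈ S ↔ ¬ T (Vx.r r) := by
    intro r
    rw [hSdef, Finset.mem_filter]
    simp [r.2, r.2.le]
  have hSo : Mv I + 1 ∈ S ↔ ¬ T Vx.o := by
    rw [hSdef, Finset.mem_filter]
    simp
  have hBc : ∀ r : Fin (Mv J), r.1 + 1 ∈ Sb ↔ T (Vx.c r) := by
    intro r
    rw [hSbdef, Finset.mem_filter]
    simp [r.2, r.2.le]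
  have hBo : Mv J + 1 ∈ Sb ↔ T Vx.o := by
    rw [hSbdef, Finset.mem_filter]
    simp
  have hSs : S ⊆ Finset.Icc 1 (Mv I + 1) := by rw [hSdef]; exact Finset.filter_subset _ _
  have hBs : Sb ⊆ Finset.Icc 1 (Mv J + 1) := by rw [hSbdef]; exact Finset.filter_subset _ _
  clear hSdef hSbdef
  have hIcc : ∀ (N s : ℕ), s ∈ Finset.Icc 1 (N + 1) → (∃ r : Fin N, s = r.1 + 1) ∨ s = N + 1 := by
    intro N s hs
    rw [Finset.mem_Icc] at hs
    rcases hs.2.lt_or_eq with h | h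
    · exact Or.inl ⟨⟨s-1, by omega⟩, by simp; omega⟩
    · exact Or.inr h
  have hal : aval n ct J lbar (Mv J + 1) = 0 := aval_last J lbar
  refine ⟨(S, Sb), ?_, ?_⟩
  · intro mu hmu
    have hmc := creg_of_plus hct I mu hmu.2
    have hgmu := hgm mu hmu.1 hmc
    have hsmu := hsm mu hmu.1 hmc
    unfold IsSepPair
    rw [mval_eq, mval_eq]
    refine ⟨?_, ?_, hSs, hBs, ?_, ?_, ?_, ?_, ?_⟩
    · rcases hsa with h | h
      · exact ⟨_, (hSr s0).2 h.2⟩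
      · exact ⟨_, hSo.2 h.1⟩
    · rcases hsa with h | h
      · exact ⟨_, hBo.2 h.1⟩
      · exact ⟨_, (hBc a0).2 h.2⟩
    · have := s0.2; omega
    · have := a0.2; omega
    · intro s hs t ht nu hnu hnr
      have hgnu := hgm nu (Relation.ReflTransGen.trans hmu.1 hnu) (creg_of_reg hct I nu hnr)
      rcases hIcc _ _ (hSs hs) with ⟨r, rfl⟩ | rfl <;> rcases hIcc _ _ (hBs ht) with ⟨c, rfl⟩ | rfl
      · rw [← hav_def, nsl_x hct hav hgnu, nsl_x hct hav hgmu,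
          hsmu.full (Pos.x r c true) ((hSr r).1 hs) ((hBc c).1 ht),
          hsmu.full (Pos.x r c false) ((hSr r).1 hs) ((hBc c).1 ht)]
        exact Nat.add_le_add (Bool.toNat_le _) (Bool.toNat_le _)
      · rw [hal, nsl_z hct hgnu, nsl_z hct hgmu,
          hsmu.full (Pos.z r) ((hSr r).1 hs) (hBo.1 ht)]
        exact Bool.toNat_le _
      · rw [← hav_def, nsl_u hct hgnu, nsl_u hct hgmu,
          hsmu.full (Pos.u c) (hSo.1 hs) ((hBc c).1 ht)]
        exact Bool.toNat_le _
      · exact absurd (hBo.1 ht) (hSo.1 hs)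
    · intro s hs hs' t ht ht'
      rcases hIcc _ _ hs with ⟨r, rfl⟩ | rfl <;> rcases hIcc _ _ ht with ⟨c, rfl⟩ | rfl
      · rw [hSr] at hs'; rw [hBc] at ht'
        rw [← hav_def, nsl_x hct hav hgmu, hsmu.emp (Pos.x r c true) hs' ht',
          hsmu.emp (Pos.x r c false) hs' ht']
        rfl
      · rw [hSr] at hs'; rw [hBo] at ht'
        rw [hal, nsl_z hct hgmu, hsmu.emp (Pos.z r) hs' ht']
        rfl
      · rw [hSo] at hs'; rw [hBc] at ht'
        rw [← hav_def, nsl_u hct hgmu, hsmu.emp (Pos.u c) hs' ht']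
        rfl
      · rw [hSo] at hs'; rw [hBo] at ht'
        exact absurd ht' hs'
    · cases ct
      · simp only [hSo, hBo]
      · simp only [hSo, hBo]
      · exact absurd rfl hct
  · have hcz : (Finset.univ.filter (fun k : Fin n => sgf J k = Mv J)).card =
        (Finset.univ.filter (fun k : Fin n => lam k = 0)).card := by
      refine Finset.card_equiv π fun k => ?_
      simp only [Finset.mem_filter, Finset.mem_univ, true_and]
      have hk := hπ k
      constructor
      · intro h
        rw [d3 k h, abs_zero] at hk
        exact abs_eq_zero.mp hk.symm
      · intro h
        rw [h, abs_zero, abs_eq_zero] at hk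
        by_contra hcon
        have := d4 k (lt_of_le_of_ne (sgf_le J k) hcon)
        linarith
    rw [nsval_last n ct hct, nsval_last n ct hct, hcz, mval_eq] at h1 h2
    simp only [Nat.add_sub_cancel] at h1 h2
    intro hw
    unfold IsWeakPair at hw
    simp only [mval_eq, Prod.mk.injEq, Nat.add_sub_cancel] at hw
    rcases hw with ⟨e1, e2⟩ | ⟨e1, e2⟩ | ⟨e1, e2⟩ | ⟨e1, e2⟩
    · have tto : T Vx.o := hBo.1 (by rw [e2]; simp)
      have tr : ∀ r, ¬ T (Vx.r r) := fun r => (hSr r).1 (by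
        rw [e1, Finset.mem_Icc]; have := r.2; omega)
      have tc' : ∀ c, ¬ T (Vx.c c) := fun c hc => by
        have := (hBc c).2 hc
        rw [e2, Finset.mem_singleton] at this
        have := c.2; omega
      have hlast : ∀ k, sgf I k ≠ Mv I := by
        intro k hk
        obtain ⟨p, hp⟩ := hg.ex k
        rcases p with ⟨r, c, e⟩ | r | c
        · have := hp.1; have := r.2; omega
        · have := hp.1; have := r.2; omega
        · have h3 := hsat.emp (Pos.u c) (not_not.mpr tto) (tc' c)
          have h4 := stt_true.mpr ⟨k, hp⟩
          rw [h3] at h4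
          exact Bool.false_ne_true h4
      apply h1
      refine ⟨?_, card_zero hg (fun r => hsat.full (Pos.z r) (tr r) tto) hlast⟩
      rw [Finset.card_eq_zero, Finset.filter_eq_empty_iff]
      intro k _
      exact hlast k
    · exact hSo.1 (by rw [e1, Finset.mem_Icc]; omega) (hBo.1 (by rw [e2]; simp))
    · have tto : ¬ T Vx.o := hSo.1 (by rw [e1]; simp)
      have tc' : ∀ c, T (Vx.c c) := fun c => (hBc c).1 (by
        rw [e2, Finset.mem_Icc]; have := c.2; omega)
      have tr : ∀ r, T (Vx.r r) := fun r => by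
        by_contra hc
        have := (hSr r).2 hc
        rw [e1, Finset.mem_singleton] at this
        have := r.2; omega
      apply h2
      refine ⟨card_last hav hg (fun c => hsat.full (Pos.u c) tto (tc' c)), ?_⟩
      rw [Finset.card_eq_zero, Finset.filter_eq_empty_iff]
      intro k _ hk
      obtain ⟨p, hp⟩ := hg.ex k
      rcases p with ⟨r, c, e⟩ | r | c
      · have := hp.2
        have := hav.pos c
        cases e <;> simp_all
      · have h3 := hsat.emp (Pos.z r) (not_not.mpr (tr r)) tto
        have h4 := stt_true.mpr ⟨k, hp⟩
        rw [h3] at h4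
        exact Bool.false_ne_true h4
      · have h3 := hp.2
        have := hav.pos c
        rw [hk, abs_zero] at h3
        linarith
    · exact hSo.1 (by rw [e1]; simp) (hBo.1 (by rw [e2, Finset.mem_Icc]; omega))

/-- Proposition 5.6 / `ssprop1`. -/
theorem statement4 (n : ℕ) (ct : CType) (hct : ct = CType.B ∨ ct = CType.C)
    (I J : Finset (Fin n)) (lam lbar : V n)
    (hint : IntegralW n ct lam) (hreg : RegI n ct I lam)
    (horb : WOrb n ct lam lbar) (hdom : DominantW n ct lbar)
    (hJ : ∀ i : Fin n, i ∈ J ↔ inn lbar (alphaR n ct i) = 0)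
    (hA : 0 < aval n ct J lbar (mval n J - 1))
    (i : Fin n) (hregi : RegI n ct I (sRefl (ee i) lam))
    (hnc : ¬ Conn n ct I lam (sRefl (ee i) lam))
    (h1 : ¬ (nsval n ct I (mval n I) = 0 ∧ nsval n ct J (mval n J) = mval n I - 1))
    (h2 : ¬ (nsval n ct I (mval n I) = mval n J - 1 ∧ nsval n ct J (mval n J) = 0)) :
    StronglySepSys n ct I J lbar := by
  exact final (by rcases hct with rfl | rfl <;> decide) I J lam lbar hreg horb hdom hJ i hregi hnc h1 h2

end JantzenBlocks
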